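/- arXiv:2305.08280 — 2 statements merged into one kernel-verified Lean document; each statement's English description precedes it below -/
import Mathlib

section
/- Let a, b, δ ∈ ℝ, h > 0, β > 0, set μ = (a−1)² − 4b, and let λ₋ = ((1−a) − √μ)/2 ∈ ℂ, where √μ denotes the principal square root (so Re √μ ≥ 0). Then there exists a nonzero twice continuously differentiable function u : (0,∞) → ℂ satisfying x² u''(x) + a x u'(x) + (b − h x^{2β}) u(x) = 0 for all x > 0 and ∫₀^∞ |u(x)|² x^{−2δ} dx < ∞, if and only if Re λ₋ − δ > −1/2. Equivalently, the operator T = x²∂ₓ² + a x ∂ₓ + (b − h x^{2β}) is injective on x^δ L²((0,∞), dx) if and only if Re λ₋ ≤ δ − 1/2, where λ₋ is the root of the indicial polynomial λ² + (a−1)λ + b with the smaller real part. -/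
open MeasureTheory Complex Real Set

noncomputable section

/-!
With `γ = (1 - a) / 2`, the substitution `x = eᵗ`, `u = x^γ w` turns the equation into the
Schrödinger equation `w'' = (μ / 4 + h e^{2βt}) w` on the line and the integrability condition into
`∫ |w|² e^{κt} dt < ∞` with `κ = 2 - a - 2δ`. The claim becomes: a nonzero such `w` exists if and
only if `Re √μ < κ`.

*Necessity*, `μ ≥ 0`. If `⟪w, w'⟫` is positive somewhere then, the potential being nonnegative and
unbounded, `|w|` grows faster than every exponential at `+∞`. Otherwise comparison with the constant
potential `μ / 4` shows that `|w|² e^{√μ t}` is nonincreasing, so that `|w|² e^{κt}` is bounded away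
from zero at `-∞` unless `√μ < κ`.

*Necessity*, `μ < 0`. At `-∞` the equation is an integrable perturbation of a harmonic oscillator,
whose energy therefore stays between two positive constants. As kinetic and potential energy balance
on average, `|w|²` is not integrable at `-∞`, and `κ > 0` follows.

*Sufficiency*. Take `w(t) = K_ν(√h e^{βt} / β)` with `ν = √μ / (2β)`. The integral representation
`2 K_ν(z) = ∫ exp(ν s - z cosh s) ds` gives `K_ν(z) = O(z^{-τ})` on all of `(0, ∞)` for every
`τ > |Re ν|`, which is enough for integrability at both ends.
-/

open Filter
open scoped RealInnerProductSpace ENNReal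

/-! ### Growth of solutions of `w'' = q w` -/

theorem not_integrable_of_forall_mem_le {α : Type*} [MeasurableSpace α] {μ : Measure α}
    {f : α → ℝ} {s : Set α} {c : ℝ} (hc : 0 < c) (hs : μ s = ∞) (hf : ∀ x ∈ s, c ≤ f x) :
    ¬ Integrable f μ := fun hint =>
  (hint.measure_norm_ge_lt_top hc).ne <|
    measure_mono_top (fun x hx => (hf x hx).trans (le_abs_self _)) hs

theorem tendsto_atTop_of_eventually_le_deriv {f f' : ℝ → ℝ} {c : ℝ} (hc : 0 < c)
    (hf : ∀ t, HasDerivAt f (f' t) t) (hf' : ∀ᶠ t in atTop, c ≤ f' t) :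
    Tendsto f atTop atTop := by
  obtain ⟨T, hT⟩ := eventually_atTop.1 hf'
  have hlin : ∀ t ≥ T, c * (t - T) + f T ≤ f t := fun t ht => by
    have := (convex_Ici T).mul_sub_le_image_sub_of_le_deriv
      (fun t _ => (hf t).continuousAt.continuousWithinAt)
      (fun t _ => (hf t).differentiableAt.differentiableWithinAt)
      (fun t ht => (hf t).deriv ▸ hT t (interior_subset ht)) T self_mem_Ici t ht ht
    linarith
  refine tendsto_atTop_mono' _ (eventually_atTop.2 ⟨T, hlin⟩) ?_
  exact tendsto_atTop_add_const_right _ _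
    ((tendsto_atTop_add_const_right _ (-T) tendsto_id).const_mul_atTop hc)

theorem tendsto_atBot_of_eventually_le_deriv {f f' : ℝ → ℝ} {c : ℝ} (hc : 0 < c)
    (hf : ∀ t, HasDerivAt f (f' t) t) (hf' : ∀ᶠ t in atBot, c ≤ f' t) :
    Tendsto f atBot atBot := by
  have hreflect : ∀ t, HasDerivAt (fun t => -f (-t)) (f' (-t)) t := fun t => by
    simpa using! ((hf (-t)).comp t (hasDerivAt_neg t)).neg
  have := tendsto_atTop_of_eventually_le_deriv hc hreflect (tendsto_neg_atTop_atBot.eventually hf')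
  simpa [Function.comp_def] using tendsto_neg_atTop_atBot.comp (this.comp tendsto_neg_atBot_atTop)

theorem monotone_mul_exp_of_neg_mul_le_deriv {f f' R r : ℝ → ℝ}
    (hf : ∀ t, HasDerivAt f (f' t) t) (hR : ∀ t, HasDerivAt R (r t) t)
    (hle : ∀ t, -(r t * f t) ≤ f' t) : Monotone fun t => f t * Real.exp (R t) := by
  refine monotone_of_hasDerivAt_nonneg (fun t => (hf t).mul (hR t).exp) fun t => ?_
  calc (0 : ℝ) ≤ (f' t + r t * f t) * Real.exp (R t) :=
        mul_nonneg (by linarith [hle t]) (Real.exp_pos _).le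
    _ = f' t * Real.exp (R t) + f t * (Real.exp (R t) * r t) := by ring

theorem antitone_mul_exp_neg_of_deriv_le_mul {f f' R r : ℝ → ℝ}
    (hf : ∀ t, HasDerivAt f (f' t) t) (hR : ∀ t, HasDerivAt R (r t) t)
    (hle : ∀ t, f' t ≤ r t * f t) : Antitone fun t => f t * Real.exp (-R t) := by
  have := monotone_mul_exp_of_neg_mul_le_deriv (fun t => (hf t).neg) (fun t => (hR t).neg)
    (fun t => by simpa using hle t)
  simpa [Function.comp_def] using this.neg

section OscillatorEnergy

variable {F : Type*} [NormedAddCommGroup F]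

/-- Energy of a harmonic oscillator of frequency `ω` with position `x` and velocity `v`, without
the customary factor `1 / 2`. It is a Lyapunov function for `w'' = (-ω² + r) w` where `r` is
small. -/
def oscillatorEnergy (ω : ℝ) (x v : F) : ℝ := ‖v‖ ^ 2 + ω ^ 2 * ‖x‖ ^ 2

theorem oscillatorEnergy_nonneg (ω : ℝ) (x v : F) : 0 ≤ oscillatorEnergy ω x v := by
  unfold oscillatorEnergy
  positivity

theorem oscillatorEnergy_pos {ω : ℝ} (hω : 0 < ω) {x : F} (hx : x ≠ 0) (v : F) :
    0 < oscillatorEnergy ω x v := by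
  unfold oscillatorEnergy
  positivity

variable [InnerProductSpace ℝ F]

theorem two_mul_mul_abs_inner_le_oscillatorEnergy {ω : ℝ} (hω : 0 ≤ ω) (x v : F) :
    2 * ω * |⟪x, v⟫| ≤ oscillatorEnergy ω x v := by
  calc 2 * ω * |⟪x, v⟫| ≤ 2 * ω * (‖x‖ * ‖v‖) := by
        gcongr
        exact abs_real_inner_le_norm _ _
    _ = 2 * ‖v‖ * (ω * ‖x‖) := by ring
    _ ≤ ‖v‖ ^ 2 + (ω * ‖x‖) ^ 2 := two_mul_le_add_sq _ _
    _ = oscillatorEnergy ω x v := by rw [mul_pow, oscillatorEnergy]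

theorem abs_two_mul_mul_inner_le_oscillatorEnergy {ω ρ : ℝ} (hω : 0 < ω) (hρ : 0 ≤ ρ) (x v : F) :
    |2 * ρ * ⟪x, v⟫| ≤ ρ / ω * oscillatorEnergy ω x v := by
  calc |2 * ρ * ⟪x, v⟫| = ρ / ω * (2 * ω * |⟪x, v⟫|) := by
        rw [abs_mul, abs_of_nonneg (by positivity)]
        field_simp
    _ ≤ ρ / ω * oscillatorEnergy ω x v := by
        gcongr
        exact two_mul_mul_abs_inner_le_oscillatorEnergy hω.le x v

end OscillatorEnergy

/-- `w` solves the Schrödinger equation `w'' = q w` on the whole line, with derivative `w'`.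
Carrying `w'` as data lets the second-order equation be read as a first-order system. -/
structure IsSchrodingerSolution {E : Type*} [NormedAddCommGroup E] [NormedSpace ℝ E]
    (q : ℝ → ℝ) (w w' : ℝ → E) : Prop where
  hasDerivAt : ∀ t, HasDerivAt w (w' t) t
  hasDerivAt_deriv : ∀ t, HasDerivAt w' (q t • w t) t

namespace IsSchrodingerSolution

section Regularity

variable {E : Type*} [NormedAddCommGroup E] [NormedSpace ℝ E] {q : ℝ → ℝ} {w w' : ℝ → E}

theorem continuous (hw : IsSchrodingerSolution q w w') : Continuous w :=
  continuous_iff_continuousAt.2 fun t => (hw.hasDerivAt t).continuousAt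

theorem contDiff_two (hw : IsSchrodingerSolution q w w') (hq : Continuous q) :
    ContDiff ℝ 2 w := by
  have hderiv : deriv w = w' := funext fun t => (hw.hasDerivAt t).deriv
  have hderiv' : deriv w' = fun t => q t • w t := funext fun t => (hw.hasDerivAt_deriv t).deriv
  refine (contDiff_succ_iff_deriv (n := 1)).2
    ⟨fun t => (hw.hasDerivAt t).differentiableAt, by simp, ?_⟩
  rw [hderiv, contDiff_one_iff_deriv, hderiv']
  exact ⟨fun t => (hw.hasDerivAt_deriv t).differentiableAt, hq.smul hw.continuous⟩

end Regularity

section NormSq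

variable {F : Type*} [NormedAddCommGroup F] [InnerProductSpace ℝ F] {q : ℝ → ℝ} {w w' : ℝ → F}

theorem hasDerivAt_norm_sq (hw : IsSchrodingerSolution q w w') (t : ℝ) :
    HasDerivAt (fun t => ‖w t‖ ^ 2) (2 * ⟪w t, w' t⟫) t :=
  (hw.hasDerivAt t).norm_sq

theorem hasDerivAt_inner (hw : IsSchrodingerSolution q w w') (t : ℝ) :
    HasDerivAt (fun t => ⟪w t, w' t⟫) (‖w' t‖ ^ 2 + q t * ‖w t‖ ^ 2) t :=
  ((hw.hasDerivAt t).inner ℝ (hw.hasDerivAt_deriv t)).congr_deriv <| by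
    rw [inner_smul_right, real_inner_self_eq_norm_sq, real_inner_self_eq_norm_sq]
    ring

theorem hasDerivAt_inner_sub_mul_norm_sq (hw : IsSchrodingerSolution q w w') (M t : ℝ) :
    HasDerivAt (fun t => ⟪w t, w' t⟫ - M * ‖w t‖ ^ 2)
      (‖w' t - M • w t‖ ^ 2 + (q t - M ^ 2) * ‖w t‖ ^ 2) t := by
  refine ((hw.hasDerivAt_inner t).sub ((hw.hasDerivAt_norm_sq t).const_mul M)).congr_deriv ?_
  rw [norm_sub_sq_real, inner_smul_right, norm_smul, mul_pow, Real.norm_eq_abs, sq_abs,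
    real_inner_comm]
  ring

theorem monotone_inner (hw : IsSchrodingerSolution q w w') (hq : ∀ t, 0 ≤ q t) :
    Monotone fun t => ⟪w t, w' t⟫ :=
  monotone_of_hasDerivAt_nonneg hw.hasDerivAt_inner fun t => by
    have := hq t
    positivity

theorem tendsto_norm_sq_atTop (hw : IsSchrodingerSolution q w w') (hq : ∀ t, 0 ≤ q t) {s : ℝ}
    (hs : 0 < ⟪w s, w' s⟫) : Tendsto (fun t => ‖w t‖ ^ 2) atTop atTop :=
  tendsto_atTop_of_eventually_le_deriv (mul_pos two_pos hs) hw.hasDerivAt_norm_sq <|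
    eventually_atTop.2 ⟨s, fun _ ht =>
      mul_le_mul_of_nonneg_left (hw.monotone_inner hq ht) two_pos.le⟩

theorem eventually_mul_norm_sq_le_inner (hw : IsSchrodingerSolution q w w') (hq : ∀ t, 0 ≤ q t)
    (hq_top : Tendsto q atTop atTop) {s : ℝ} (hs : 0 < ⟪w s, w' s⟫) (M : ℝ) :
    ∀ᶠ t in atTop, M * ‖w t‖ ^ 2 ≤ ⟪w t, w' t⟫ := by
  obtain ⟨T, hT⟩ := eventually_atTop.1 (hq_top.eventually_ge_atTop ((M + 1) ^ 2))
  set g : ℝ → ℝ := fun t => ⟪w t, w' t⟫ - (M + 1) * ‖w t‖ ^ 2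
  have hg : MonotoneOn g (Ici T) :=
    monotoneOn_of_hasDerivWithinAt_nonneg (convex_Ici T)
      (fun t _ => (hw.hasDerivAt_inner_sub_mul_norm_sq _ t).continuousAt.continuousWithinAt)
      (fun t _ => (hw.hasDerivAt_inner_sub_mul_norm_sq _ t).hasDerivWithinAt)
      fun t ht => by
        have := sub_nonneg.2 (hT t (interior_subset ht))
        positivity
  filter_upwards [eventually_ge_atTop T,
    (hw.tendsto_norm_sq_atTop hq hs).eventually_ge_atTop (-g T)] with t ht hlarge
  have hgT : g T ≤ ⟪w t, w' t⟫ - (M + 1) * ‖w t‖ ^ 2 := hg self_mem_Ici ht ht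
  linarith

theorem not_integrable_of_inner_pos (hw : IsSchrodingerSolution q w w') (hq : ∀ t, 0 ≤ q t)
    (hq_top : Tendsto q atTop atTop) {s : ℝ} (hs : 0 < ⟪w s, w' s⟫) (κ : ℝ) :
    ¬ Integrable fun t => ‖w t‖ ^ 2 * Real.exp (κ * t) := by
  set f : ℝ → ℝ := fun t => ‖w t‖ ^ 2 * Real.exp (κ * t)
  have hf : ∀ t, HasDerivAt f ((2 * ⟪w t, w' t⟫ + κ * ‖w t‖ ^ 2) * Real.exp (κ * t)) t := fun t =>
    ((hw.hasDerivAt_norm_sq t).mul ((hasDerivAt_id t).const_mul κ).exp).congr_deriv <| by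
      simp only [id]
      ring
  obtain ⟨T, hT⟩ := eventually_atTop.1 <|
    (hw.eventually_mul_norm_sq_le_inner hq hq_top hs (-κ / 2)).and
      ((hw.tendsto_norm_sq_atTop hq hs).eventually_gt_atTop 0)
  have hmono : MonotoneOn f (Ici T) :=
    monotoneOn_of_hasDerivWithinAt_nonneg (convex_Ici T)
      (fun t _ => (hf t).continuousAt.continuousWithinAt) (fun t _ => (hf t).hasDerivWithinAt)
      fun t ht => mul_nonneg (by linarith [(hT t (interior_subset ht)).1]) (Real.exp_pos _).le
  exact not_integrable_of_forall_mem_le (mul_pos (hT T le_rfl).2 (Real.exp_pos _)) volume_Ici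
    fun t ht => hmono self_mem_Ici ht ht

theorem inner_add_mul_norm_sq_nonpos (hw : IsSchrodingerSolution q w w') {k : ℝ}
    (hq : ∀ t, k ^ 2 ≤ q t) (hq_top : Tendsto q atTop atTop) (hinner : ∀ t, ⟪w t, w' t⟫ ≤ 0)
    (s : ℝ) : ⟪w s, w' s⟫ + k * ‖w s‖ ^ 2 ≤ 0 := by
  by_contra! hpos
  have hmono : Monotone fun t => ⟪w t, w' t⟫ - -k * ‖w t‖ ^ 2 :=
    monotone_of_hasDerivAt_nonneg (hw.hasDerivAt_inner_sub_mul_norm_sq (-k)) fun t => by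
      have : 0 ≤ q t - (-k) ^ 2 := by linarith [hq t, neg_sq k]
      positivity
  have hgrowth : ∀ᶠ t in atTop, ⟪w s, w' s⟫ + k * ‖w s‖ ^ 2 ≤ ‖w' t‖ ^ 2 + q t * ‖w t‖ ^ 2 := by
    filter_upwards [eventually_ge_atTop s, hq_top.eventually_ge_atTop k] with t hst hkq
    calc ⟪w s, w' s⟫ + k * ‖w s‖ ^ 2 ≤ ⟪w t, w' t⟫ + k * ‖w t‖ ^ 2 := by
          linarith [hmono hst]
      _ ≤ 0 + q t * ‖w t‖ ^ 2 := by
          gcongr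
          exact hinner t
      _ ≤ ‖w' t‖ ^ 2 + q t * ‖w t‖ ^ 2 := by
          gcongr
          positivity
  obtain ⟨t, ht⟩ :=
    ((tendsto_atTop_of_eventually_le_deriv hpos hw.hasDerivAt_inner hgrowth).eventually_gt_atTop
      0).exists
  exact ht.not_ge (hinner t)

theorem two_mul_lt_of_integrable (hw : IsSchrodingerSolution q w w') {k κ : ℝ}
    (hq : ∀ t, k ^ 2 ≤ q t) (hq_top : Tendsto q atTop atTop) (hne : ∃ t, w t ≠ 0)
    (hint : Integrable fun t => ‖w t‖ ^ 2 * Real.exp (κ * t)) : 2 * k < κ := by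
  by_contra! hκ
  obtain ⟨s, hs⟩ := hne
  have hinner : ∀ t, ⟪w t, w' t⟫ ≤ 0 := fun t => not_lt.1 fun ht =>
    hw.not_integrable_of_inner_pos (fun t => (sq_nonneg k).trans (hq t)) hq_top ht κ hint
  have hanti : Antitone fun t => ‖w t‖ ^ 2 * Real.exp (-(-(2 * k) * t)) :=
    antitone_mul_exp_neg_of_deriv_le_mul hw.hasDerivAt_norm_sq
      (fun _ => hasDerivAt_const_mul (-(2 * k))) fun t => by
        linarith [hw.inner_add_mul_norm_sq_nonpos hq hq_top hinner t]
  refine not_integrable_of_forall_mem_le (s := Iic s)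
    (c := ‖w s‖ ^ 2 * Real.exp (κ * s)) (by positivity) volume_Iic (fun t ht => ?_) hint
  have hts : t ≤ s := ht
  calc ‖w s‖ ^ 2 * Real.exp (κ * s)
      = ‖w s‖ ^ 2 * Real.exp (-(-(2 * k) * s)) * Real.exp ((κ - 2 * k) * s) := by
        rw [mul_assoc, ← Real.exp_add]
        ring_nf
    _ ≤ ‖w t‖ ^ 2 * Real.exp (-(-(2 * k) * t)) * Real.exp ((κ - 2 * k) * t) := by
        gcongr ?_ * Real.exp ?_
        · exact hanti hts
        · exact mul_le_mul_of_nonpos_left hts (by linarith)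
    _ = ‖w t‖ ^ 2 * Real.exp (κ * t) := by
        rw [mul_assoc, ← Real.exp_add]
        ring_nf

section Oscillatory

variable {ω : ℝ} {R r : ℝ → ℝ}

theorem hasDerivAt_oscillatorEnergy (hw : IsSchrodingerSolution (fun t => -ω ^ 2 + r t) w w')
    (t : ℝ) :
    HasDerivAt (fun t => oscillatorEnergy ω (w t) (w' t)) (2 * r t * ⟪w t, w' t⟫) t := by
  refine ((hw.hasDerivAt_deriv t).norm_sq.add
    ((hw.hasDerivAt_norm_sq t).const_mul (ω ^ 2))).congr_deriv ?_
  rw [inner_smul_right, real_inner_comm]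
  ring

theorem oscillatorEnergy_le (hw : IsSchrodingerSolution (fun t => -ω ^ 2 + r t) w w')
    (hω : 0 < ω) (hr : ∀ t, 0 ≤ r t) (hR : ∀ t, HasDerivAt R (r t) t) (hR₀ : ∀ t, 0 ≤ R t)
    {s t : ℝ} (hts : t ≤ s) :
    oscillatorEnergy ω (w t) (w' t) ≤
      oscillatorEnergy ω (w s) (w' s) * Real.exp (R s / ω) := by
  have hmono := monotone_mul_exp_of_neg_mul_le_deriv hw.hasDerivAt_oscillatorEnergy
    (fun t => (hR t).div_const ω)
    fun t => (abs_le.1 (abs_two_mul_mul_inner_le_oscillatorEnergy hω (hr t) _ _)).1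
  exact (le_mul_of_one_le_right (oscillatorEnergy_nonneg _ _ _)
    (Real.one_le_exp (div_nonneg (hR₀ t) hω.le))).trans (hmono hts)

theorem le_oscillatorEnergy (hw : IsSchrodingerSolution (fun t => -ω ^ 2 + r t) w w')
    (hω : 0 < ω) (hr : ∀ t, 0 ≤ r t) (hR : ∀ t, HasDerivAt R (r t) t) (hR₀ : ∀ t, 0 ≤ R t)
    {s t : ℝ} (hts : t ≤ s) :
    oscillatorEnergy ω (w s) (w' s) * Real.exp (-(R s / ω)) ≤
      oscillatorEnergy ω (w t) (w' t) := by
  have hanti := antitone_mul_exp_neg_of_deriv_le_mul hw.hasDerivAt_oscillatorEnergy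
    (fun t => (hR t).div_const ω)
    fun t => (abs_le.1 (abs_two_mul_mul_inner_le_oscillatorEnergy hω (hr t) _ _)).2
  exact (hanti hts).trans <| mul_le_of_le_one_right (oscillatorEnergy_nonneg _ _ _)
    (Real.exp_le_one_iff.2 (neg_nonpos.2 (div_nonneg (hR₀ t) hω.le)))

-- Equipartition: the derivative of `⟪w, w'⟫` is at least the energy minus `2 ω² ‖w‖²`. The energy
-- stays bounded away from zero, whereas `⟪w, w'⟫` stays bounded.
theorem not_integrableOn_Iic_norm_sq
    (hw : IsSchrodingerSolution (fun t => -ω ^ 2 + r t) w w')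
    (hω : 0 < ω) (hr : ∀ t, 0 ≤ r t) (hR : ∀ t, HasDerivAt R (r t) t) (hR₀ : ∀ t, 0 ≤ R t)
    {s : ℝ} (hs : w s ≠ 0) : ¬ IntegrableOn (fun t => ‖w t‖ ^ 2) (Iic s) := by
  intro hint
  set G : ℝ → ℝ := fun t => ⟪w t, w' t⟫ + 2 * ω ^ 2 * ∫ τ in s..t, ‖w τ‖ ^ 2
  have hG : ∀ t, HasDerivAt G
      (‖w' t‖ ^ 2 + (-ω ^ 2 + r t) * ‖w t‖ ^ 2 + 2 * ω ^ 2 * ‖w t‖ ^ 2) t := fun t =>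
    (hw.hasDerivAt_inner t).add <|
      ((hw.continuous.norm.pow 2).integral_hasStrictDerivAt s t).hasDerivAt.const_mul _
  have hG_bot : Tendsto G atBot atBot := by
    refine tendsto_atBot_of_eventually_le_deriv
      (mul_pos (oscillatorEnergy_pos hω hs (w' s)) (Real.exp_pos (-(R s / ω)))) hG ?_
    filter_upwards [eventually_le_atBot s] with t hts
    refine (hw.le_oscillatorEnergy hω hr hR hR₀ hts).trans ?_
    unfold oscillatorEnergy
    linarith [mul_nonneg (hr t) (sq_nonneg ‖w t‖)]
  have hG_ge : ∀ t ≤ s, -(oscillatorEnergy ω (w s) (w' s) * Real.exp (R s / ω) / (2 * ω)) -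
      2 * ω ^ 2 * ∫ τ in Iic s, ‖w τ‖ ^ 2 ≤ G t := fun t hts => by
    have hinner : |⟪w t, w' t⟫| ≤
        oscillatorEnergy ω (w s) (w' s) * Real.exp (R s / ω) / (2 * ω) := by
      rw [le_div_iff₀' (by positivity)]
      exact (two_mul_mul_abs_inner_le_oscillatorEnergy hω.le _ _).trans
        (hw.oscillatorEnergy_le hω hr hR hR₀ hts)
    have hmass : ∫ τ in t..s, ‖w τ‖ ^ 2 ≤ ∫ τ in Iic s, ‖w τ‖ ^ 2 := by
      rw [intervalIntegral.integral_of_le hts]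
      exact setIntegral_mono_set hint (ae_of_all _ fun _ => sq_nonneg _)
        Ioc_subset_Iic_self.eventuallyLE
    have := mul_le_mul_of_nonneg_left hmass (by positivity : 0 ≤ 2 * ω ^ 2)
    simp only [G, intervalIntegral.integral_symm t s]
    linarith [neg_abs_le ⟪w t, w' t⟫]
  obtain ⟨t, hlt, hts⟩ := ((hG_bot.eventually_lt_atBot _).and (eventually_le_atBot s)).exists
  exact hlt.not_ge (hG_ge t hts)

theorem pos_of_integrable (hw : IsSchrodingerSolution (fun t => -ω ^ 2 + r t) w w')
    (hω : 0 < ω) (hr : ∀ t, 0 ≤ r t) (hR : ∀ t, HasDerivAt R (r t) t) (hR₀ : ∀ t, 0 ≤ R t)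
    (hne : ∃ t, w t ≠ 0) {κ : ℝ} (hint : Integrable fun t => ‖w t‖ ^ 2 * Real.exp (κ * t)) :
    0 < κ := by
  by_contra! hκ
  obtain ⟨s, hs⟩ := hne
  refine hw.not_integrableOn_Iic_norm_sq hω hr hR hR₀ hs ?_
  refine (hint.integrableOn.const_mul (Real.exp (-(κ * s)))).mono'
    (hw.continuous.norm.pow 2).aestronglyMeasurable ?_
  refine (ae_restrict_iff' measurableSet_Iic).2 (ae_of_all _ fun t (hts : t ≤ s) => ?_)
  calc ‖‖w t‖ ^ 2‖ = ‖w t‖ ^ 2 * 1 := by simp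
    _ ≤ ‖w t‖ ^ 2 * Real.exp (-(κ * s) + κ * t) := by
        gcongr
        exact Real.one_le_exp (by linarith [mul_le_mul_of_nonpos_left hts hκ])
    _ = Real.exp (-(κ * s)) * (‖w t‖ ^ 2 * Real.exp (κ * t)) := by
        rw [Real.exp_add]
        ring

end Oscillatory

end NormSq

end IsSchrodingerSolution

/-! ### The modified Bessel function `K_ν` -/

theorem integrable_exp_neg_mul_abs {c : ℝ} (hc : 0 < c) :
    Integrable fun t : ℝ => Real.exp (-c * |t|) := by
  rw [← integrableOn_univ, ← Iic_union_Ioi (a := (0 : ℝ)), integrableOn_union]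
  constructor
  · refine (integrableOn_exp_mul_Iic hc 0).congr_fun (fun t ht => ?_) measurableSet_Iic
    simp only [abs_of_nonpos (mem_Iic.1 ht), neg_mul_neg]
  · refine (integrableOn_exp_mul_Ioi (neg_lt_zero.2 hc) 0).congr_fun (fun t ht => ?_)
      measurableSet_Ioi
    simp only [abs_of_pos (mem_Ioi.1 ht)]

theorem integrable_of_norm_le_exp {E : Type*} [NormedAddCommGroup E] {f : ℝ → E}
    (hf : AEStronglyMeasurable f) {ε C D : ℝ} (hε : 0 < ε)
    (hC : ∀ t, ‖f t‖ ≤ C * Real.exp (-ε * t)) (hD : ∀ t, ‖f t‖ ≤ D * Real.exp (ε * t)) :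
    Integrable f := by
  refine ((integrable_exp_neg_mul_abs hε).const_mul (max C D)).mono' hf (ae_of_all _ fun t => ?_)
  rcases abs_cases t with ⟨h, -⟩ | ⟨h, -⟩ <;> rw [h]
  · exact (hC t).trans (by gcongr; exact le_max_left _ _)
  · exact (hD t).trans (by rw [neg_mul_neg]; gcongr; exact le_max_right _ _)

theorem exp_abs_le_two_mul_cosh (s : ℝ) : Real.exp |s| ≤ 2 * Real.cosh s := by
  rw [← Real.cosh_abs, Real.cosh_eq]
  linarith [Real.exp_pos (-|s|)]

theorem abs_sinh_le_cosh (s : ℝ) : |Real.sinh s| ≤ Real.cosh s := by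
  rw [Real.abs_sinh, ← Real.cosh_abs]
  exact (Real.sinh_lt_cosh _).le

theorem one_add_sq_div_two_le_cosh (s : ℝ) : 1 + s ^ 2 / 2 ≤ Real.cosh s := by
  have hsinh : (s / 2) ^ 2 ≤ Real.sinh (s / 2) ^ 2 := by
    rw [sq_le_sq, Real.abs_sinh]
    exact Real.self_le_sinh_iff.2 (abs_nonneg _)
  have hcosh := Real.cosh_two_mul (s / 2)
  rw [mul_div_cancel₀ s two_ne_zero, Real.cosh_sq] at hcosh
  linarith

theorem exp_neg_le_mul_rpow_neg {τ y : ℝ} (hτ : 0 ≤ τ) (hy : 0 < y) :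
    Real.exp (-y) ≤ τ ^ τ * y ^ (-τ) := by
  have := ProbabilityTheory.rpow_abs_le_mul_exp_abs y hτ one_ne_zero
  rw [abs_one, div_one, one_mul, abs_of_pos hy] at this
  rw [Real.exp_neg, Real.rpow_neg hy.le, ← div_eq_mul_inv, inv_le_iff_one_le_mul₀ (by positivity)]
  rwa [div_mul_eq_mul_div, one_le_div (by positivity)]

/-- Integrand of `besselKMoment`. -/
def besselKIntegrand (ν : ℂ) (n : ℕ) (z s : ℝ) : ℂ :=
  (Real.cosh s : ℂ) ^ n * Complex.exp (ν * s - z * Real.cosh s)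

/-- The integral `∫ cosh(s)ⁿ exp(ν s - z cosh s) ds` over the whole line. For `0 < z` it equals
`(-1)ⁿ 2 K_ν⁽ⁿ⁾(z)`, with `K_ν` the modified Bessel function of the second kind; the line, rather
than the half-line, is used so that integration by parts has no boundary terms. -/
def besselKMoment (ν : ℂ) (n : ℕ) (z : ℝ) : ℂ := ∫ s : ℝ, besselKIntegrand ν n z s

section BesselK

variable (ν : ℂ) (n : ℕ) (z s : ℝ)

theorem besselKIntegrand_succ :
    besselKIntegrand ν (n + 1) z s = Real.cosh s * besselKIntegrand ν n z s := by
  rw [besselKIntegrand, besselKIntegrand, pow_succ', mul_assoc]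

theorem norm_besselKIntegrand :
    ‖besselKIntegrand ν n z s‖ = Real.cosh s ^ n * Real.exp (ν.re * s - z * Real.cosh s) := by
  rw [besselKIntegrand, norm_mul, norm_pow, Complex.norm_real,
    Real.norm_of_nonneg (Real.cosh_pos s).le, Complex.norm_exp, Complex.sub_re,
    Complex.re_mul_ofReal, ← Complex.ofReal_mul, Complex.ofReal_re]

theorem re_besselKIntegrand :
    (besselKIntegrand ν n z s).re =
      Real.cosh s ^ n * (Real.exp (ν.re * s - z * Real.cosh s) * Real.cos (ν.im * s)) := by
  rw [besselKIntegrand, ← Complex.ofReal_pow, Complex.re_ofReal_mul, Complex.exp_re,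
    Complex.sub_re, Complex.sub_im, Complex.re_mul_ofReal, Complex.im_mul_ofReal,
    ← Complex.ofReal_mul, Complex.ofReal_re, Complex.ofReal_im, sub_zero]

theorem continuous_besselKIntegrand : Continuous (besselKIntegrand ν n z) := by
  have := Real.continuous_cosh
  unfold besselKIntegrand
  fun_prop

theorem hasDerivAt_besselKIntegrand_left :
    HasDerivAt (fun z => besselKIntegrand ν n z s) (-besselKIntegrand ν (n + 1) z s) z := by
  have hexponent : HasDerivAt (fun z : ℝ => ν * s - z * Real.cosh s) (-(Real.cosh s : ℂ)) z := by
    simpa using ((Complex.ofRealCLM.hasDerivAt (x := z)).mul_const (Real.cosh s : ℂ)).const_sub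
      (ν * s)
  refine (hexponent.cexp.const_mul ((Real.cosh s : ℂ) ^ n)).congr_deriv ?_
  rw [besselKIntegrand]
  ring

theorem hasDerivAt_besselKIntegrand_right :
    HasDerivAt (besselKIntegrand ν 0 z) ((ν - z * Real.sinh s) * besselKIntegrand ν 0 z s) s := by
  have hzero : besselKIntegrand ν 0 z = fun s => Complex.exp (ν * s - z * Real.cosh s) :=
    funext fun s => by rw [besselKIntegrand, pow_zero, one_mul]
  have hexponent : HasDerivAt (fun s : ℝ => ν * s - z * Real.cosh s) (ν - z * Real.sinh s) s := by
    simpa using! ((Complex.ofRealCLM.hasDerivAt (x := s)).const_mul ν).sub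
      ((Real.hasDerivAt_cosh s).ofReal_comp.const_mul (z : ℂ))
  rw [hzero, mul_comm]
  exact hexponent.cexp

variable {n z}

theorem exists_norm_besselKIntegrand_le {τ : ℝ} (hτ : n ≤ τ) :
    ∃ C, ∀ z > 0, ∀ s, ‖besselKIntegrand ν n z s‖ ≤
      C * z ^ (-τ) * Real.exp (-(τ - n - |ν.re|) * |s|) := by
  refine ⟨τ ^ τ * 2 ^ (τ - n), fun z hz s => ?_⟩
  have hcosh := Real.cosh_pos s
  have hτ₀ : 0 ≤ τ := n.cast_nonneg.trans hτ
  have hre : ν.re * s ≤ |ν.re| * |s| := (le_abs_self _).trans (abs_mul _ _).le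
  have hdecay : Real.cosh s ^ (n - τ) ≤ 2 ^ (τ - n) * Real.exp (-(τ - n) * |s|) :=
    calc Real.cosh s ^ (n - τ) ≤ (Real.exp |s| / 2) ^ (n - τ) :=
          Real.rpow_le_rpow_of_nonpos (by positivity)
            (by linarith [exp_abs_le_two_mul_cosh s]) (by linarith)
      _ = 2 ^ (τ - n) * Real.exp (-(τ - n) * |s|) := by
          rw [Real.div_rpow (Real.exp_pos _).le two_pos.le, ← Real.exp_mul, ← neg_sub τ,
            Real.rpow_neg two_pos.le, div_inv_eq_mul]
          ring_nf
  calc ‖besselKIntegrand ν n z s‖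
      = Real.exp (ν.re * s) * (Real.cosh s ^ (n : ℝ) * Real.exp (-(z * Real.cosh s))) := by
        rw [norm_besselKIntegrand, sub_eq_add_neg, Real.exp_add, Real.rpow_natCast]
        ring
    _ ≤ Real.exp (|ν.re| * |s|) *
          (Real.cosh s ^ (n : ℝ) * (τ ^ τ * (z * Real.cosh s) ^ (-τ))) := by
        gcongr
        exact exp_neg_le_mul_rpow_neg hτ₀ (mul_pos hz hcosh)
    _ = τ ^ τ * z ^ (-τ) * Real.exp (|ν.re| * |s|) * Real.cosh s ^ (n - τ) := by
        rw [Real.mul_rpow hz.le hcosh.le, sub_eq_add_neg, Real.rpow_add hcosh]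
        ring
    _ ≤ τ ^ τ * z ^ (-τ) * Real.exp (|ν.re| * |s|) *
          (2 ^ (τ - n) * Real.exp (-(τ - n) * |s|)) := by gcongr
    _ = τ ^ τ * 2 ^ (τ - n) * z ^ (-τ) * Real.exp (-(τ - n - |ν.re|) * |s|) := by
        rw [show -(τ - n - |ν.re|) * |s| = |ν.re| * |s| + -(τ - n) * |s| by ring, Real.exp_add]
        ring

theorem integrable_besselKIntegrand (n : ℕ) (hz : 0 < z) : Integrable (besselKIntegrand ν n z) := by
  obtain ⟨C, hC⟩ := exists_norm_besselKIntegrand_le ν (n := n) (τ := n + |ν.re| + 1)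
    (by linarith [abs_nonneg ν.re])
  refine ((integrable_exp_neg_mul_abs ?_).const_mul _).mono'
    (continuous_besselKIntegrand ν n z).aestronglyMeasurable (ae_of_all _ (hC z hz))
  linarith

theorem exists_norm_besselKMoment_le {τ : ℝ} (hτ : n + |ν.re| < τ) :
    ∃ C, ∀ z > 0, ‖besselKMoment ν n z‖ ≤ C * z ^ (-τ) := by
  obtain ⟨C, hC⟩ := exists_norm_besselKIntegrand_le ν (n := n) (τ := τ)
    (by linarith [abs_nonneg ν.re])
  refine ⟨C * ∫ s, Real.exp (-(τ - n - |ν.re|) * |s|), fun z hz => ?_⟩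
  calc ‖besselKMoment ν n z‖
      ≤ ∫ s, C * z ^ (-τ) * Real.exp (-(τ - n - |ν.re|) * |s|) :=
        norm_integral_le_of_norm_le ((integrable_exp_neg_mul_abs (by linarith)).const_mul _)
          (ae_of_all _ (hC z hz))
    _ = _ := by
        rw [integral_const_mul]
        ring

theorem hasDerivAt_besselKMoment (n : ℕ) (hz : 0 < z) :
    HasDerivAt (besselKMoment ν n) (-besselKMoment ν (n + 1) z) z := by
  rw [besselKMoment, ← integral_neg]
  refine (hasDerivAt_integral_of_dominated_loc_of_deriv_le (Ioi_mem_nhds (half_lt_self hz))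
    (.of_forall fun x => (continuous_besselKIntegrand ν n x).aestronglyMeasurable)
    (integrable_besselKIntegrand ν n hz)
    (continuous_besselKIntegrand ν (n + 1) z).neg.aestronglyMeasurable
    (ae_of_all _ fun s x hx => ?_) (integrable_besselKIntegrand ν (n + 1) (half_pos hz)).norm
    (ae_of_all _ fun s x _ => hasDerivAt_besselKIntegrand_left ν n x s)).2
  have := Real.cosh_pos s
  have : z / 2 ≤ x := le_of_lt hx
  rw [norm_neg, norm_besselKIntegrand, norm_besselKIntegrand]
  gcongr

theorem integrable_sinh_mul_besselKIntegrand (n : ℕ) (hz : 0 < z) :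
    Integrable fun s => (Real.sinh s : ℂ) * besselKIntegrand ν n z s := by
  refine (integrable_besselKIntegrand ν (n + 1) hz).mono ?_ (ae_of_all _ fun s => ?_)
  · have := Real.continuous_sinh
    exact ((Complex.continuous_ofReal.comp this).mul
      (continuous_besselKIntegrand ν n z)).aestronglyMeasurable
  · rw [besselKIntegrand_succ, norm_mul, norm_mul, Complex.norm_real, Complex.norm_real,
      Real.norm_eq_abs, Real.norm_of_nonneg (Real.cosh_pos s).le]
    gcongr
    exact abs_sinh_le_cosh s

theorem hasDerivAt_neg_mul_sinh_add_mul_besselKIntegrand (z s : ℝ) :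
    HasDerivAt (fun s => -((z : ℂ) * (Real.sinh s * besselKIntegrand ν 0 z s)
        + ν * besselKIntegrand ν 0 z s))
      (z ^ 2 * besselKIntegrand ν 2 z s - z * besselKIntegrand ν 1 z s
        - (z ^ 2 + ν ^ 2) * besselKIntegrand ν 0 z s) s := by
  have hg := hasDerivAt_besselKIntegrand_right ν z s
  have hcosh : (Real.cosh s : ℂ) ^ 2 = Real.sinh s ^ 2 + 1 := mod_cast Real.cosh_sq s
  refine ((((Real.hasDerivAt_sinh s).ofReal_comp.mul hg).const_mul (z : ℂ)).add
    (hg.const_mul ν)).neg.congr_deriv ?_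
  rw [besselKIntegrand_succ ν 1, besselKIntegrand_succ ν 0]
  linear_combination -(z : ℂ) ^ 2 * besselKIntegrand ν 0 z s * hcosh

theorem sq_mul_besselKMoment_two_sub (hz : 0 < z) :
    z ^ 2 * besselKMoment ν 2 z - z * besselKMoment ν 1 z =
      (z ^ 2 + ν ^ 2) * besselKMoment ν 0 z := by
  have hint := fun (n : ℕ) (c : ℂ) => (integrable_besselKIntegrand ν n hz).const_mul c
  have hint' : Integrable fun s =>
      z ^ 2 * besselKIntegrand ν 2 z s - z * besselKIntegrand ν 1 z s :=
    (hint 2 _).sub (hint 1 _)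
  have hparts := integral_eq_zero_of_hasDerivAt_of_integrable
    (hasDerivAt_neg_mul_sinh_add_mul_besselKIntegrand ν z)
    (hint'.sub (hint 0 _))
    (((integrable_sinh_mul_besselKIntegrand ν 0 hz).const_mul _).add (hint 0 _)).neg
  rw [integral_sub hint' (hint 0 _), integral_sub (hint 2 _) (hint 1 _),
    integral_const_mul, integral_const_mul, integral_const_mul] at hparts
  exact sub_eq_zero.1 hparts

theorem re_besselKMoment (n : ℕ) (hz : 0 < z) :
    (besselKMoment ν n z).re = ∫ s, (besselKIntegrand ν n z s).re :=
  (Complex.reCLM.integral_comp_comm (integrable_besselKIntegrand ν n hz)).symm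

variable {ν}

theorem re_besselKMoment_pos_of_im_eq_zero (hν : ν.im = 0) (n : ℕ) (hz : 0 < z) :
    0 < (besselKMoment ν n z).re := by
  rw [re_besselKMoment ν n hz]
  have hpos : ∀ s, 0 < (besselKIntegrand ν n z s).re := fun s => by
    have := Real.cosh_pos s
    rw [re_besselKIntegrand, hν, zero_mul, Real.cos_zero]
    positivity
  exact integral_pos_of_integrable_nonneg_nonzero
    (Complex.continuous_re.comp (continuous_besselKIntegrand ν n z))
    (integrable_besselKIntegrand ν n hz).re (fun s => (hpos s).le) (ne_of_gt (hpos 0))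

-- The quadratic in `cosh s` is chosen so that its integral against `exp (-z cosh s)` is known
-- exactly: for `z = ω ^ 2 + 1 / 2` the bracket integrates to zero by the Bessel equation.
theorem half_sub_half_mul_le_cos (ω s : ℝ) :
    1 / 2 - 1 / 2 * ((ω ^ 2 + 1 / 2) * Real.cosh s ^ 2 - Real.cosh s - (ω ^ 2 + 1 / 2)) ≤
      Real.cos (ω * s) := by
  have hcosh := mul_le_mul_of_nonneg_left (one_add_sq_div_two_le_cosh s) (sq_nonneg ω)
  have hsq := mul_nonneg (by positivity : 0 ≤ ω ^ 2 + 1 / 2) (sq_nonneg (Real.cosh s - 1))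
  linarith [Real.one_sub_sq_div_two_le_cos (x := ω * s)]

theorem re_besselKMoment_pos_of_re_eq_zero (hν : ν.re = 0) :
    0 < (besselKMoment ν 0 (ν.im ^ 2 + 1 / 2)).re := by
  set z := ν.im ^ 2 + 1 / 2 with hz_def
  have hz : 0 < z := by positivity
  have hint : ∀ (n : ℕ) (c : ℝ), Integrable fun s => c * (besselKIntegrand 0 n z s).re :=
    fun n c => (integrable_besselKIntegrand 0 n hz).re.const_mul c
  have hode : z * (besselKMoment 0 2 z).re - (besselKMoment 0 1 z).re =
      z * (besselKMoment 0 0 z).re := by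
    have hcancel : z * besselKMoment 0 2 z - besselKMoment 0 1 z = z * besselKMoment 0 0 z :=
      mul_left_cancel₀ (Complex.ofReal_ne_zero.2 hz.ne')
        (by linear_combination sq_mul_besselKMoment_two_sub 0 hz)
    simpa only [Complex.sub_re, Complex.re_ofReal_mul] using congrArg Complex.re hcancel
  calc 0 < 1 / 2 * (besselKMoment 0 0 z).re :=
        mul_pos one_half_pos (re_besselKMoment_pos_of_im_eq_zero Complex.zero_im 0 hz)
    _ = -z / 2 * (besselKMoment 0 2 z).re
          + (1 / 2 * (besselKMoment 0 1 z).re + (1 + z) / 2 * (besselKMoment 0 0 z).re) := by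
        linear_combination (1 / 2) * hode
    _ ≤ (besselKMoment ν 0 z).re := by
        simp only [re_besselKMoment _ _ hz, ← integral_const_mul]
        rw [← integral_add (hint 1 _) (hint 0 _),
          ← integral_add (hint 2 _) ((hint 1 _).fun_add (hint 0 _))]
        refine integral_mono ((hint 2 _).add ((hint 1 _).add (hint 0 _)))
          (integrable_besselKIntegrand ν 0 hz).re fun s => ?_
        have := mul_le_mul_of_nonneg_left (half_sub_half_mul_le_cos ν.im s)
          (Real.exp_pos (-(z * Real.cosh s))).le
        rw [← hz_def] at this
        simp only [re_besselKIntegrand, Complex.zero_re, Complex.zero_im, hν, zero_mul, zero_sub,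
          Real.cos_zero]
        linarith

theorem exists_besselKMoment_ne_zero (hν : ν.re = 0 ∨ ν.im = 0) :
    ∃ z > 0, besselKMoment ν 0 z ≠ 0 := by
  rcases hν with hre | him
  · exact ⟨ν.im ^ 2 + 1 / 2, by positivity, fun h =>
      (re_besselKMoment_pos_of_re_eq_zero hre).ne' (by rw [h, Complex.zero_re])⟩
  · exact ⟨1, one_pos, fun h =>
      (re_besselKMoment_pos_of_im_eq_zero him 0 one_pos).ne' (by rw [h, Complex.zero_re])⟩

theorem hasDerivAt_besselKMoment_comp {f : ℝ → ℝ} {f' t : ℝ} (hf : HasDerivAt f f' t)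
    (hpos : 0 < f t) (n : ℕ) :
    HasDerivAt (fun t => besselKMoment ν n (f t)) (f' • -besselKMoment ν (n + 1) (f t)) t :=
  (hasDerivAt_besselKMoment ν n hpos).scomp t hf

theorem isSchrodingerSolution_besselKMoment {m : ℝ} (hν : ν ^ 2 = m) {c : ℝ} (hc : 0 < c)
    (β : ℝ) :
    IsSchrodingerSolution (fun t => β ^ 2 * ((c * Real.exp (β * t)) ^ 2 + m))
      (fun t => besselKMoment ν 0 (c * Real.exp (β * t)))
      (fun t => (c * Real.exp (β * t) * β) • -besselKMoment ν 1 (c * Real.exp (β * t))) := by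
  have hpos : ∀ t, 0 < c * Real.exp (β * t) := fun t => by positivity
  have harg : ∀ t, HasDerivAt (fun t => c * Real.exp (β * t)) (c * Real.exp (β * t) * β) t :=
    fun t => ((hasDerivAt_const_mul β).exp.const_mul c).congr_deriv (by ring)
  refine ⟨fun t => hasDerivAt_besselKMoment_comp (harg t) (hpos t) 0, fun t => ?_⟩
  refine (((harg t).mul_const β).smul
    (hasDerivAt_besselKMoment_comp (harg t) (hpos t) 1).fun_neg).congr_deriv ?_
  have hode := sq_mul_besselKMoment_two_sub ν (hpos t)
  simp only [Complex.real_smul]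
  push_cast at hode ⊢
  linear_combination (β : ℂ) ^ 2 * hode + (β : ℂ) ^ 2 * besselKMoment ν 0 _ * hν

theorem exists_norm_sq_besselKMoment_mul_exp_le {c β σ : ℝ} (hc : 0 < c) (hβ : 0 < β)
    (hσ : 2 * β * |ν.re| < σ) (κ : ℝ) :
    ∃ C, ∀ t, ‖besselKMoment ν 0 (c * Real.exp (β * t))‖ ^ 2 * Real.exp (κ * t) ≤
      C * Real.exp ((κ - σ) * t) := by
  obtain ⟨C, hC⟩ := exists_norm_besselKMoment_le ν (n := 0) (τ := σ / (2 * β))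
    (by rwa [Nat.cast_zero, zero_add, lt_div_iff₀' (by positivity)])
  refine ⟨(C * c ^ (-(σ / (2 * β)))) ^ 2, fun t => ?_⟩
  calc ‖besselKMoment ν 0 (c * Real.exp (β * t))‖ ^ 2 * Real.exp (κ * t)
      ≤ (C * (c * Real.exp (β * t)) ^ (-(σ / (2 * β)))) ^ 2 * Real.exp (κ * t) := by
        gcongr
        exact hC _ (by positivity)
    _ = (C * c ^ (-(σ / (2 * β)))) ^ 2 *
          (Real.exp (β * t * -(σ / (2 * β))) ^ 2 * Real.exp (κ * t)) := by
        rw [Real.mul_rpow hc.le (Real.exp_pos _).le, ← Real.exp_mul]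
        ring
    _ = (C * c ^ (-(σ / (2 * β)))) ^ 2 * Real.exp ((κ - σ) * t) := by
        rw [← Real.exp_nat_mul, ← Real.exp_add]
        field_simp
        ring_nf

theorem integrable_norm_sq_besselKMoment_mul_exp {c β κ : ℝ} (hc : 0 < c) (hβ : 0 < β)
    (hκ : 2 * β * |ν.re| < κ) :
    Integrable fun t => ‖besselKMoment ν 0 (c * Real.exp (β * t))‖ ^ 2 * Real.exp (κ * t) := by
  have hcont : Continuous fun t => besselKMoment ν 0 (c * Real.exp (β * t)) :=
    continuous_iff_continuousAt.2 fun t =>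
      (hasDerivAt_besselKMoment ν 0 (by positivity)).continuousAt.comp (by fun_prop)
  obtain ⟨ε, hε, hεκ⟩ : ∃ ε > 0, 2 * β * |ν.re| + ε < κ :=
    ⟨(κ - 2 * β * |ν.re|) / 2, by linarith, by linarith⟩
  obtain ⟨C, hC⟩ := exists_norm_sq_besselKMoment_mul_exp_le hc hβ
    (show 2 * β * |ν.re| < κ + ε by linarith) κ
  obtain ⟨D, hD⟩ := exists_norm_sq_besselKMoment_mul_exp_le hc hβ
    (show 2 * β * |ν.re| < κ - ε by linarith) κ
  exact integrable_of_norm_le_exp (by fun_prop) hε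
    (fun t => by simpa using hC t) (fun t => by simpa using hD t)

end BesselK

/-! ### The potential `m / 4 + h exp (2 β t)` -/

section ExponentialPotential

variable {m h β κ : ℝ}

-- `Real.sqrt` is `0` on negative numbers, so for `m < 0` the conclusion reads `0 < κ`.
theorem IsSchrodingerSolution.sqrt_lt_of_integrable {F : Type*} [NormedAddCommGroup F]
    [InnerProductSpace ℝ F] {w w' : ℝ → F}
    (hw : IsSchrodingerSolution (fun t => m / 4 + h * Real.exp (2 * β * t)) w w') (hh : 0 < h)
    (hβ : 0 < β) (hne : ∃ t, w t ≠ 0)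
    (hint : Integrable fun t => ‖w t‖ ^ 2 * Real.exp (κ * t)) : √m < κ := by
  have hpos : ∀ t, 0 < h * Real.exp (2 * β * t) := fun t => by positivity
  rcases le_or_gt 0 m with hm | hm
  · have hq : ∀ t, (√m / 2) ^ 2 ≤ m / 4 + h * Real.exp (2 * β * t) := fun t => by
      rw [div_pow, Real.sq_sqrt hm]
      linarith [hpos t]
    have hq_top : Tendsto (fun t => m / 4 + h * Real.exp (2 * β * t)) atTop atTop :=
      tendsto_atTop_add_const_left _ _ <|
        (Real.tendsto_exp_atTop.comp
          (tendsto_id.const_mul_atTop (by positivity))).const_mul_atTop hh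
    linarith [hw.two_mul_lt_of_integrable hq hq_top hne hint]
  · rw [Real.sqrt_eq_zero_of_nonpos hm.le]
    have hω : -(√(-m) / 2) ^ 2 = m / 4 := by
      rw [div_pow, Real.sq_sqrt (by linarith)]
      ring
    have hR : ∀ t, HasDerivAt (fun t => h * Real.exp (2 * β * t) / (2 * β))
        (h * Real.exp (2 * β * t)) t := fun t =>
      (((hasDerivAt_const_mul (2 * β)).exp.const_mul h).div_const _).congr_deriv (by field_simp)
    exact pos_of_integrable (by rwa [hω]) (half_pos (Real.sqrt_pos.2 (neg_pos.2 hm)))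
      (fun t => (hpos t).le) hR (fun t => div_nonneg (hpos t).le (by positivity)) hne hint

theorem exists_isSchrodingerSolution_integrable (hh : 0 < h) (hβ : 0 < β) (hκ : √m < κ) :
    ∃ w w' : ℝ → ℂ,
      IsSchrodingerSolution (fun t => m / 4 + h * Real.exp (2 * β * t)) w w' ∧
      (∃ t, w t ≠ 0) ∧ Integrable fun t => ‖w t‖ ^ 2 * Real.exp (κ * t) := by
  set ν : ℂ := Complex.sqrt m / ((2 * β : ℝ) : ℂ) with hν_def
  have hν : ν ^ 2 = ((m / (2 * β) ^ 2 : ℝ) : ℂ) := by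
    rw [hν_def, div_pow, Complex.sqrt, Complex.cpow_ofNat_inv_pow]
    push_cast
    rfl
  have hν_re : ν.re = √m / (2 * β) := by rw [hν_def, Complex.div_ofReal_re, Complex.re_sqrt_ofReal]
  have hν_axis : ν.re = 0 ∨ ν.im = 0 := by
    have := congrArg Complex.im hν
    rw [Complex.ofReal_im, sq, Complex.mul_im] at this
    exact mul_eq_zero.1 (by linarith)
  have hc : 0 < √h / β := by positivity
  have hsol := isSchrodingerSolution_besselKMoment hν hc β
  have hq : ∀ t, β ^ 2 * ((√h / β * Real.exp (β * t)) ^ 2 + m / (2 * β) ^ 2) =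
      m / 4 + h * Real.exp (2 * β * t) := fun t => by
    rw [mul_pow, div_pow, Real.sq_sqrt hh.le, ← Real.exp_nat_mul]
    field_simp
    ring_nf
  simp only [hq] at hsol
  obtain ⟨z, hz, hne⟩ := exists_besselKMoment_ne_zero hν_axis
  refine ⟨_, _, hsol, ⟨Real.log (z / (√h / β)) / β, ?_⟩,
    integrable_norm_sq_besselKMoment_mul_exp hc hβ ?_⟩
  · rwa [mul_div_cancel₀ _ hβ.ne', Real.exp_log (by positivity), mul_div_cancel₀ _ hc.ne']
  · rwa [hν_re, abs_of_nonneg (by positivity), mul_div_cancel₀ _ (by positivity)]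

theorem exists_isSchrodingerSolution_integrable_iff (hh : 0 < h) (hβ : 0 < β) :
    (∃ w w' : ℝ → ℂ,
      IsSchrodingerSolution (fun t => m / 4 + h * Real.exp (2 * β * t)) w w' ∧
      (∃ t, w t ≠ 0) ∧ Integrable fun t => ‖w t‖ ^ 2 * Real.exp (κ * t)) ↔ √m < κ :=
  ⟨fun ⟨_, _, hw, hne, hint⟩ => hw.sqrt_lt_of_integrable hh hβ hne hint,
    exists_isSchrodingerSolution_integrable hh hβ⟩

end ExponentialPotential

/-! ### Passing to logarithmic coordinates -/

section LogTransform

variable {E : Type*} [NormedAddCommGroup E] [NormedSpace ℝ E]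

/-- The Liouville substitution `x = eᵗ`, `u = x^γ w`: it turns functions on `(0, ∞)` into functions
on the line, and `x² u'' + (1 - 2 γ) x u'` into `x^γ (w'' - γ² w)`. -/
def logTransform (γ : ℝ) (u : ℝ → E) (t : ℝ) : E := Real.exp (-(γ * t)) • u (Real.exp t)

theorem hasDerivAt_logTransform {u : ℝ → E} {u' : E} {t : ℝ} (hu : HasDerivAt u u' (Real.exp t))
    (γ : ℝ) :
    HasDerivAt (logTransform γ u)
      (Real.exp (-(γ * t)) • (Real.exp t • u' - γ • u (Real.exp t))) t := by
  refine ((hasDerivAt_const_mul γ).fun_neg.exp.smul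
    (hu.scomp t (Real.hasDerivAt_exp t))).congr_deriv ?_
  simp only [Function.comp_apply]
  module

theorem exists_contDiffOn_logTransform_eq {n : WithTop ℕ∞} {w : ℝ → E} (hw : ContDiff ℝ n w)
    (γ : ℝ) : ∃ u, ContDiffOn ℝ n u (Ioi 0) ∧ logTransform γ u = w := by
  have hne : ∀ x ∈ Ioi (0 : ℝ), x ≠ 0 := fun x hx => (mem_Ioi.1 hx).ne'
  refine ⟨fun x => x ^ γ • w (Real.log x), (contDiffOn_id.rpow_const_of_ne hne).smul
    (hw.comp_contDiffOn (contDiffOn_id.log hne)), funext fun t => ?_⟩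
  rw [logTransform, Real.log_exp, ← Real.exp_mul, smul_smul, ← Real.exp_add, mul_comm t,
    neg_add_cancel, Real.exp_zero, one_smul]

theorem exists_logTransform_ne_zero_iff (γ : ℝ) (u : ℝ → E) :
    (∃ t, logTransform γ u t ≠ 0) ↔ ∃ x ∈ Ioi (0 : ℝ), u x ≠ 0 := by
  rw [← Real.range_exp, exists_range_iff]
  simp only [logTransform, ne_eq, smul_eq_zero, Real.exp_ne_zero, false_or]

theorem integrableOn_Ioi_iff_integrable_exp_smul_comp_exp (g : ℝ → E) :
    IntegrableOn g (Ioi 0) ↔ Integrable fun t => Real.exp t • g (Real.exp t) := by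
  rw [← Real.range_exp, ← image_univ, integrableOn_image_iff_integrableOn_abs_deriv_smul
    MeasurableSet.univ (fun t _ => (Real.hasDerivAt_exp t).hasDerivWithinAt)
    Real.exp_injective.injOn, integrableOn_univ]
  simp only [Real.abs_exp]

theorem integrableOn_norm_sq_mul_rpow_iff (γ δ : ℝ) (u : ℝ → E) :
    IntegrableOn (fun x => ‖u x‖ ^ 2 * x ^ (-(2 * δ))) (Ioi 0) ↔
      Integrable fun t => ‖logTransform γ u t‖ ^ 2 * Real.exp ((1 + 2 * γ - 2 * δ) * t) := by
  rw [integrableOn_Ioi_iff_integrable_exp_smul_comp_exp]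
  refine integrable_congr (ae_of_all _ fun t => ?_)
  have hexp : Real.exp (-(γ * t)) ^ 2 * Real.exp ((1 + 2 * γ - 2 * δ) * t) =
      Real.exp t * Real.exp t ^ (-(2 * δ)) := by
    rw [← Real.exp_mul, ← Real.exp_nat_mul, ← Real.exp_add, ← Real.exp_add]
    ring_nf
  simp only [logTransform]
  rw [norm_smul, Real.norm_of_nonneg (Real.exp_pos _).le, mul_pow, smul_eq_mul]
  linear_combination (-‖u (Real.exp t)‖ ^ 2) * hexp

theorem hasDerivAt_logTransform_smul_sub {u u' : ℝ → E} {u'' : E} {t : ℝ}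
    (hu : HasDerivAt u (u' (Real.exp t)) (Real.exp t)) (hu' : HasDerivAt u' u'' (Real.exp t))
    (γ c : ℝ) :
    HasDerivAt (logTransform γ fun x => x • u' x - γ • u x)
      ((γ ^ 2 - c) • logTransform γ u t + Real.exp (-(γ * t)) •
        (Real.exp t ^ 2 • u'' + ((1 - 2 * γ) * Real.exp t) • u' (Real.exp t)
          + c • u (Real.exp t))) t := by
  have hinner : HasDerivAt (fun x => x • u' x - γ • u x)
      (Real.exp t • u'' + (1 : ℝ) • u' (Real.exp t) - γ • u' (Real.exp t)) (Real.exp t) :=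
    ((hasDerivAt_id _).smul hu').sub (hu.const_smul γ)
  refine (hasDerivAt_logTransform hinner γ).congr_deriv ?_
  rw [logTransform]
  module

theorem isSchrodingerSolution_logTransform_iff {u : ℝ → E} (hu : ContDiffOn ℝ 2 u (Ioi 0))
    (γ : ℝ) (p : ℝ → ℝ) :
    IsSchrodingerSolution (fun t => γ ^ 2 - p (Real.exp t)) (logTransform γ u)
        (logTransform γ fun x => x • deriv u x - γ • u x) ↔
      ∀ x ∈ Ioi (0 : ℝ),
        x ^ 2 • deriv (deriv u) x + ((1 - 2 * γ) * x) • deriv u x + p x • u x = 0 := by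
  have hderiv : ∀ t, HasDerivAt u (deriv u (Real.exp t)) (Real.exp t) := fun t =>
    ((hu.differentiableOn two_ne_zero).differentiableAt
      (Ioi_mem_nhds (Real.exp_pos t))).hasDerivAt
  have hderiv₂ : ∀ t, HasDerivAt (deriv u) (deriv (deriv u) (Real.exp t)) (Real.exp t) := fun t =>
    (((hu.deriv_of_isOpen (m := 1) isOpen_Ioi (by norm_num)).differentiableOn
      one_ne_zero).differentiableAt (Ioi_mem_nhds (Real.exp_pos t))).hasDerivAt
  have hsecond := fun t =>
    hasDerivAt_logTransform_smul_sub (hderiv t) (hderiv₂ t) γ (p (Real.exp t))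
  rw [← Real.range_exp, forall_mem_range]
  constructor
  · intro hw t
    have := (hsecond t).unique (hw.hasDerivAt_deriv t)
    exact (smul_eq_zero.1 (add_eq_left.1 this)).resolve_left (Real.exp_ne_zero _)
  · intro hode
    exact ⟨fun t => hasDerivAt_logTransform (hderiv t) γ,
      fun t => (hsecond t).congr_deriv (by rw [hode t, smul_zero, add_zero])⟩

theorem exists_weighted_solution_iff_exists_isSchrodingerSolution {p : ℝ → ℝ}
    (hp : ContinuousOn p (Ioi 0)) (γ δ : ℝ) :
    (∃ u : ℝ → E, (∃ x ∈ Ioi (0 : ℝ), u x ≠ 0) ∧ ContDiffOn ℝ 2 u (Ioi 0) ∧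
      (∀ x ∈ Ioi (0 : ℝ),
        x ^ 2 • deriv (deriv u) x + ((1 - 2 * γ) * x) • deriv u x + p x • u x = 0) ∧
      IntegrableOn (fun x => ‖u x‖ ^ 2 * x ^ (-(2 * δ))) (Ioi 0)) ↔
    ∃ w w' : ℝ → E, IsSchrodingerSolution (fun t => γ ^ 2 - p (Real.exp t)) w w' ∧
      (∃ t, w t ≠ 0) ∧
      Integrable fun t => ‖w t‖ ^ 2 * Real.exp ((1 + 2 * γ - 2 * δ) * t) := by
  constructor
  · rintro ⟨u, hne, hu, hode, hint⟩
    exact ⟨_, _, (isSchrodingerSolution_logTransform_iff hu γ p).2 hode,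
      (exists_logTransform_ne_zero_iff γ u).2 hne,
      (integrableOn_norm_sq_mul_rpow_iff γ δ u).1 hint⟩
  · rintro ⟨w, w', hw, hne, hint⟩
    have hq : Continuous fun t => γ ^ 2 - p (Real.exp t) :=
      continuous_const.sub (hp.comp_continuous Real.continuous_exp Real.exp_pos)
    obtain ⟨u, hu, rfl⟩ := exists_contDiffOn_logTransform_eq (hw.contDiff_two hq) γ
    obtain rfl : (logTransform γ fun x => x • deriv u x - γ • u x) = w' := funext fun t =>
      (hasDerivAt_logTransform ((hu.differentiableOn two_ne_zero).differentiableAt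
        (Ioi_mem_nhds (Real.exp_pos t))).hasDerivAt γ).unique (hw.hasDerivAt t)
    exact ⟨u, (exists_logTransform_ne_zero_iff γ u).1 hne, hu,
      (isSchrodingerSolution_logTransform_iff hu γ p).1 hw,
      (integrableOn_norm_sq_mul_rpow_iff γ δ u).2 hint⟩

end LogTransform

theorem re_indicialRoot_sub_gt_iff (a m δ : ℝ) :
    (((1 - (a : ℂ)) - (m : ℂ) ^ (1 / 2 : ℂ)) / 2).re - δ > -(1 / 2) ↔ √m < 2 - a - 2 * δ := by
  have hre : (((1 - (a : ℂ)) - (m : ℂ) ^ (1 / 2 : ℂ)) / 2).re = (1 - a - √m) / 2 := by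
    rw [one_div, ← Complex.sqrt, Complex.div_ofNat_re, Complex.sub_re, Complex.sub_re,
      Complex.re_sqrt_ofReal, Complex.one_re, Complex.ofReal_re]
  rw [hre]
  constructor <;> intro h <;> linarith

/-- Let `μ = (a−1)² − 4b` and `λ₋ = ((1−a) − √μ)/2` (principal square
root). The Bessel-type equation `x² u'' + a x u' + (b − h x^{2β}) u = 0` on `(0,∞)` has a
nonzero twice continuously differentiable solution with `∫₀^∞ |u|² x^{−2δ} dx < ∞`
if and only if `Re λ₋ − δ > −1/2`; equivalently, `T = x²∂ₓ² + a x ∂ₓ + (b − h x^{2β})` is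
injective on `x^δ L²((0,∞), dx)` if and only if `Re λ₋ ≤ δ − 1/2`. -/
theorem bessel_type_kernel_iff (a b δ h β : ℝ) (hh : 0 < h) (hβ : 0 < β) :
    (∃ u : ℝ → ℂ,
      (∃ x ∈ Ioi (0 : ℝ), u x ≠ 0) ∧
      ContDiffOn ℝ 2 u (Ioi 0) ∧
      (∀ x ∈ Ioi (0 : ℝ),
        ((x ^ 2 : ℝ) : ℂ) * deriv (deriv u) x + ((a * x : ℝ) : ℂ) * deriv u x
          + ((b - h * x ^ (2 * β) : ℝ) : ℂ) * u x = 0) ∧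
      IntegrableOn (fun x : ℝ => ‖u x‖ ^ 2 * x ^ (-(2 * δ))) (Ioi 0)) ↔
    (((1 - (a : ℂ)) - (((a - 1) ^ 2 - 4 * b : ℝ) : ℂ) ^ (1/2 : ℂ)) / 2).re - δ > -(1/2) := by
  rw [re_indicialRoot_sub_gt_iff]
  obtain ⟨γ, rfl⟩ : ∃ γ, a = 1 - 2 * γ := ⟨(1 - a) / 2, by ring⟩
  have hp : ContinuousOn (fun x : ℝ => b - h * x ^ (2 * β)) (Ioi 0) :=
    (continuous_const.sub
      (continuous_const.mul (Real.continuous_rpow_const (by positivity)))).continuousOn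
  have hpot : ∀ t, γ ^ 2 - (b - h * Real.exp t ^ (2 * β)) =
      ((1 - 2 * γ - 1) ^ 2 - 4 * b) / 4 + h * Real.exp (2 * β * t) := fun t => by
    rw [← Real.exp_mul, mul_comm t]
    ring
  have hweight : 1 + 2 * γ - 2 * δ = 2 - (1 - 2 * γ) - 2 * δ := by ring
  simp only [← Complex.real_smul]
  rw [exists_weighted_solution_iff_exists_isSchrodingerSolution hp, hweight]
  simp only [hpot]
  exact exists_isSchrodingerSolution_integrable_iff hh hβ
end
end

section
/- Borel-type lemma for polyhomogeneous asymptotic expansions: let E ⊆ ℂ × ℕ be an index set, i.e., for every N ∈ ℝ the set {(s,p) ∈ E : Re s ≤ N} is finite. Let B be a (complex) Banach space and let coefficients c(s,p) ∈ B be given for each (s,p) ∈ E. Then there exists an infinitely differentiable function u : (0,1) → B such that for every N ∈ ℕ and every k ∈ ℕ with k ≤ N, the k-th derivative of r ↦ u(r) − Σ_{(s,p) ∈ E, Re s ≤ N} r^s (log r)^p c(s,p) is O(r^{N−k}) as r → 0⁺. Moreover, if u' is another such function with the same asymptotic expansion, then u − u' vanishes to infinite order at 0: for every k ∈ ℕ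 and every N ∈ ℕ, ‖(u − u')^{(k)}(r)‖ = O(r^N) as r → 0⁺. -/
open Asymptotics Topology Set

noncomputable section

/-- The partial sum `Σ_{(s,p) ∈ E, Re s ≤ N} r^s (log r)^p c(s,p)` of a polyhomogeneous
expansion with index set `E` and Banach-space-valued coefficients `c`. -/
def phgPartialSum {B : Type*} [NormedAddCommGroup B] [NormedSpace ℂ B]
    (E : Set (ℂ × ℕ)) (c : ℂ × ℕ → B) (N : ℝ) (r : ℝ) : B :=
  ∑ᶠ q ∈ {q ∈ E | q.1.re ≤ N}, ((r : ℂ) ^ q.1 * (Real.log r : ℂ) ^ q.2) • c q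

/-- `u` admits the polyhomogeneous asymptotic expansion `Σ_{(s,p)∈E} r^s (log r)^p c(s,p)`
as `r → 0⁺`: for every `N` and every `k ≤ N`, the `k`-th derivative of the difference
between `u` and the partial sum over `Re s ≤ N` is `O(r^{N−k})` as `r → 0⁺`. -/
def HasPhgExpansion {B : Type*} [NormedAddCommGroup B] [NormedSpace ℂ B]
    (E : Set (ℂ × ℕ)) (c : ℂ × ℕ → B) (u : ℝ → B) : Prop :=
  ∀ N : ℕ, ∀ k : ℕ, k ≤ N →
    (fun r : ℝ => iteratedDeriv k (fun t : ℝ => u t - phgPartialSum E c N t) r)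
      =O[𝓝[>] (0 : ℝ)] fun r : ℝ => r ^ ((N : ℝ) - (k : ℝ))

/-!
The increments of the partial sums between consecutive integers `n` and `n + 1` are functions `gₙ`
on `(0, ∞)` with `gₙ⁽ᵏ⁾(r) = O(r ^ (n - k))` for all `k`. Such functions can be summed
asymptotically, as in Borel's lemma: replace `gₙ` by `hₙ(r) = χ(r / εₙ) gₙ(r)` with `χ` a bump
function equal to `1` near `0`. The `k`-th derivative of `χ(r / ε)` is `O(r ^ (-k))` uniformly in
`ε`, so giving up one power of `r` and taking `εₙ` small yields `|hₙ⁽ᵏ⁾(r)| ≤ 2⁻ⁿ r ^ (n - 1 - k)`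
for all `k ≤ n` and `r > 0`. The sum `∑ hₙ` is locally finite on `(0, ∞)`, and for every `N` and `k`
all but finitely many of its terms contribute `O(r ^ (N - k))` to the `k`-th derivative.

For uniqueness, subtract the expansions of `u` and `u'` truncated at `N + k` to bound the `k`-th
derivative of `u - u'` by `O(r ^ N)`.
-/

open Filter
open scoped ContDiff SchwartzMap

section IteratedDeriv

variable {F : Type*} [NormedAddCommGroup F] [NormedSpace ℝ F]

lemma contDiffAt_natCast_of_contDiffOn {f : ℝ → F} {s : Set ℝ} {x : ℝ}
    (hf : ContDiffOn ℝ ∞ f s) (hs : s ∈ 𝓝 x) (k : ℕ) : ContDiffAt ℝ k f x :=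
  (hf.contDiffAt hs).of_le (mod_cast le_top)

lemma eventually_eventually_nhds_of_nhdsGT {p : ℝ → Prop} {a : ℝ} (h : ∀ᶠ x in 𝓝[>] a, p x) :
    ∀ᶠ x in 𝓝[>] a, ∀ᶠ y in 𝓝 x, p y := by
  filter_upwards [eventually_eventually_nhdsWithin.2 h, self_mem_nhdsWithin] with x hx hxa
  rwa [isOpen_Ioi.nhdsWithin_eq hxa] at hx

lemma eventuallyEq_iteratedDeriv_nhdsGT {f g : ℝ → F} {a : ℝ} (h : f =ᶠ[𝓝[>] a] g) (k : ℕ) :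
    iteratedDeriv k f =ᶠ[𝓝[>] a] iteratedDeriv k g :=
  (eventually_eventually_nhds_of_nhdsGT h).mono fun _ hx ↦ EventuallyEq.iteratedDeriv_eq k hx

lemma norm_iteratedDeriv_smul_le {φ : ℝ → ℝ} {f : ℝ → F} {x : ℝ} {k : ℕ}
    (hφ : ContDiffAt ℝ k φ x) (hf : ContDiffAt ℝ k f x) :
    ‖iteratedDeriv k (fun t ↦ φ t • f t) x‖ ≤ ∑ i ∈ Finset.range (k + 1),
      (k.choose i : ℝ) * ‖iteratedDeriv i φ x‖ * ‖iteratedDeriv (k - i) f x‖ := by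
  have leibniz := iteratedDerivWithin_smul (mem_univ x) uniqueDiffOn_univ
    hφ.contDiffWithinAt hf.contDiffWithinAt
  simp only [iteratedDerivWithin_univ] at leibniz
  change ‖iteratedDeriv k (φ • f) x‖ ≤ _
  rw [leibniz]
  refine norm_sum_le_of_le _ fun i _ ↦ ?_
  rw [← Nat.cast_smul_eq_nsmul ℝ, norm_smul, norm_smul, RCLike.norm_natCast, mul_assoc]

lemma exists_pow_mul_norm_iteratedDeriv_comp_mul_le (χ : 𝓢(ℝ, F)) (k : ℕ) :
    ∃ C : ℝ, ∀ c x : ℝ, |x| ^ k * ‖iteratedDeriv k (fun t ↦ χ (c * t)) x‖ ≤ C := by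
  obtain ⟨C, -, hC⟩ := χ.decay k k
  refine ⟨C, fun c x ↦ ?_⟩
  have chain_rule := congrFun (iteratedDeriv_comp_const_smul (χ.smooth k) c) x
  calc |x| ^ k * ‖iteratedDeriv k (fun t ↦ χ (c * t)) x‖
      = ‖c * x‖ ^ k * ‖iteratedFDeriv ℝ k χ (c * x)‖ := by
        rw [chain_rule, norm_smul, norm_pow, norm_iteratedFDeriv_eq_norm_iteratedDeriv, norm_mul,
          mul_pow, Real.norm_eq_abs x]
        ring
    _ ≤ C := hC (c * x)

end IteratedDeriv

section LocallyFiniteSum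

variable {ι F : Type*} [NormedAddCommGroup F] {h : ι → ℝ → F} {x : ℝ}

lemma exists_eventuallyEq_tsum_sum (hx : ∃ I : Finset ι, ∀ᶠ t in 𝓝 x, ∀ i ∉ I, h i t = 0) :
    ∃ I : Finset ι, (fun t ↦ ∑' i, h i t) =ᶠ[𝓝 x] fun t ↦ ∑ i ∈ I, h i t :=
  hx.imp fun _ hI ↦ hI.mono fun _ ht ↦ tsum_eq_sum ht

lemma contDiffAt_tsum_of_locallyFinite [NormedSpace ℝ F] {n : WithTop ℕ∞}
    (hx : ∃ I : Finset ι, ∀ᶠ t in 𝓝 x, ∀ i ∉ I, h i t = 0) (hh : ∀ i, ContDiffAt ℝ n (h i) x) :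
    ContDiffAt ℝ n (fun t ↦ ∑' i, h i t) x := by
  obtain ⟨I, hI⟩ := exists_eventuallyEq_tsum_sum hx
  exact (ContDiffAt.sum fun i _ ↦ hh i).congr_of_eventuallyEq hI

lemma norm_iteratedDeriv_tsum_le_of_locallyFinite [NormedSpace ℝ F] {k : ℕ} {b : ι → ℝ}
    (hx : ∃ I : Finset ι, ∀ᶠ t in 𝓝 x, ∀ i ∉ I, h i t = 0) (hh : ∀ i, ContDiffAt ℝ k (h i) x)
    (hb : Summable b) (hle : ∀ i, ‖iteratedDeriv k (h i) x‖ ≤ b i) :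
    ‖iteratedDeriv k (fun t ↦ ∑' i, h i t) x‖ ≤ ∑' i, b i := by
  obtain ⟨I, hI⟩ := exists_eventuallyEq_tsum_sum hx
  rw [hI.iteratedDeriv_eq, iteratedDeriv_fun_sum fun i _ ↦ hh i]
  exact (norm_sum_le_of_le I fun i _ ↦ hle i).trans
    (hb.sum_le_tsum I fun i _ ↦ (norm_nonneg _).trans (hle i))

lemma exists_finset_eventually_eq_zero {h : ℕ → ℝ → F} {η : ℕ → ℝ}
    (hη : Tendsto η atTop (𝓝 0)) (hh : ∀ n r, η n ≤ r → h n r = 0) (hx : 0 < x) :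
    ∃ I : Finset ℕ, ∀ᶠ t in 𝓝 x, ∀ n ∉ I, h n t = 0 := by
  obtain ⟨m, hm⟩ := eventually_atTop.1 (hη.eventually_lt_const (half_pos hx))
  refine ⟨Finset.range m, ?_⟩
  filter_upwards [Ioi_mem_nhds (half_lt_self hx)] with t ht n hn
  exact hh n t ((hm n (by simpa using hn)).trans ht).le

lemma isBigO_iteratedDeriv_tsum [NormedSpace ℝ F] {h : ℕ → ℝ → F} {η : ℕ → ℝ} {b : ℝ} {k : ℕ}
    (hη : Summable η) (hsmooth : ∀ n, ContDiffOn ℝ ∞ (h n) (Ioi 0))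
    (hzero : ∀ n r, η n ≤ r → h n r = 0)
    (hbound : ∀ n, ∀ r ∈ Ioo (0 : ℝ) 1, ‖iteratedDeriv k (h n) r‖ ≤ η n * r ^ b) :
    iteratedDeriv k (fun t ↦ ∑' n, h n t) =O[𝓝[>] 0] fun r ↦ r ^ b := by
  refine IsBigO.of_bound (∑' n, η n) ?_
  filter_upwards [Ioo_mem_nhdsGT one_pos] with r hr
  rw [Real.norm_of_nonneg (Real.rpow_nonneg hr.1.le b), ← tsum_mul_right]
  exact norm_iteratedDeriv_tsum_le_of_locallyFinite
    (exists_finset_eventually_eq_zero hη.tendsto_atTop_zero hzero hr.1)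
    (fun n ↦ contDiffAt_natCast_of_contDiffOn (hsmooth n) (Ioi_mem_nhds hr.1) k)
    (hη.mul_right _) (fun n ↦ hbound n r hr)

end LocallyFiniteSum

/-- `f` is conormal of order `a` at `0⁺`: it is smooth on `(0, ∞)` and `f⁽ᵏ⁾(r) = O(r ^ (a - k))` as
`r → 0⁺`, for every `k`. This is the error class of polyhomogeneous expansions; the growth
condition concerns only small `r`. -/
structure IsConormal {F : Type*} [NormedAddCommGroup F] [NormedSpace ℝ F] (f : ℝ → F) (a : ℝ) :
    Prop where
  contDiffOn : ContDiffOn ℝ ∞ f (Ioi 0)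
  isBigO_iteratedDeriv (k : ℕ) : iteratedDeriv k f =O[𝓝[>] 0] fun r ↦ r ^ (a - k)

namespace IsConormal

variable {F : Type*} [NormedAddCommGroup F] [NormedSpace ℝ F] {f : ℝ → F} {a b : ℝ}

lemma contDiffAt (hf : IsConormal f a) {r : ℝ} (hr : 0 < r) (k : ℕ) : ContDiffAt ℝ k f r :=
  contDiffAt_natCast_of_contDiffOn hf.contDiffOn (Ioi_mem_nhds hr) k

lemma mono (hf : IsConormal f a) (hba : b ≤ a) : IsConormal f b where
  contDiffOn := hf.contDiffOn
  isBigO_iteratedDeriv k := by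
    refine (hf.isBigO_iteratedDeriv k).trans (IsBigO.of_bound' ?_)
    filter_upwards [Ioo_mem_nhdsGT one_pos] with r hr
    rw [Real.norm_of_nonneg (Real.rpow_nonneg hr.1.le _),
      Real.norm_of_nonneg (Real.rpow_nonneg hr.1.le _)]
    exact Real.rpow_le_rpow_of_exponent_ge hr.1 hr.2.le (by gcongr)

lemma sum {ι : Type*} {I : Finset ι} {f : ι → ℝ → F} (hf : ∀ i ∈ I, IsConormal (f i) a) :
    IsConormal (fun r ↦ ∑ i ∈ I, f i r) a where
  contDiffOn := ContDiffOn.sum fun i hi ↦ (hf i hi).contDiffOn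
  isBigO_iteratedDeriv k := by
    refine (IsBigO.sum fun i hi ↦ (hf i hi).isBigO_iteratedDeriv k).congr' ?_ EventuallyEq.rfl
    filter_upwards [self_mem_nhdsWithin] with r hr
    rw [iteratedDeriv_fun_sum fun i hi ↦ (hf i hi).contDiffAt hr k, Finset.sum_apply]

lemma smul_const {𝕜 E : Type*} [NormedField 𝕜] [NormedAlgebra ℝ 𝕜] [NormedAddCommGroup E]
    [NormedSpace ℝ E] [NormedSpace 𝕜 E] [IsScalarTower ℝ 𝕜 E] {φ : ℝ → 𝕜}
    (hφ : IsConormal φ a) (v : E) : IsConormal (fun r ↦ φ r • v) a where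
  contDiffOn := hφ.contDiffOn.smul contDiffOn_const
  isBigO_iteratedDeriv k := by
    refine (IsBigO.of_bound ‖v‖ ?_).trans (hφ.isBigO_iteratedDeriv k)
    filter_upwards [self_mem_nhdsWithin] with r hr
    rw [iteratedDeriv_smul_const (hφ.contDiffAt hr k), norm_smul, mul_comm]

lemma exists_norm_iteratedDeriv_le (hf : IsConormal f a) (k : ℕ) :
    ∃ D : ℝ, ∀ᶠ r in 𝓝[>] 0, ‖iteratedDeriv k f r‖ ≤ D * r ^ (a - k) := by
  obtain ⟨D, hD⟩ := (hf.isBigO_iteratedDeriv k).bound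
  refine ⟨D, ?_⟩
  filter_upwards [hD, self_mem_nhdsWithin] with r hr hr0
  rwa [Real.norm_of_nonneg (Real.rpow_nonneg (le_of_lt hr0) _)] at hr

lemma exists_norm_iteratedDeriv_dilate_smul_le (hf : IsConormal f a) (χ : 𝓢(ℝ, ℝ)) (k : ℕ) :
    ∃ M : ℝ, ∀ᶠ r in 𝓝[>] 0, ∀ c : ℝ,
      ‖iteratedDeriv k (fun t ↦ χ (c * t) • f t) r‖ ≤ M * r ^ (a - k) := by
  choose C hC using exists_pow_mul_norm_iteratedDeriv_comp_mul_le χ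
  choose D hD using hf.exists_norm_iteratedDeriv_le
  refine ⟨∑ i ∈ Finset.range (k + 1), (k.choose i : ℝ) * C i * D (k - i), ?_⟩
  have hDk : ∀ᶠ r in 𝓝[>] (0 : ℝ), ∀ i ∈ Finset.range (k + 1),
      ‖iteratedDeriv (k - i) f r‖ ≤ D (k - i) * r ^ (a - (k - i : ℕ)) :=
    (eventually_all_finset _).2 fun i _ ↦ hD (k - i)
  filter_upwards [hDk, self_mem_nhdsWithin] with r hDr (hr : 0 < r) c
  have hχ : ContDiff ℝ k fun t ↦ χ (c * t) := (χ.smooth k).comp (contDiff_const.mul contDiff_id)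
  refine (norm_iteratedDeriv_smul_le hχ.contDiffAt (hf.contDiffAt hr k)).trans ?_
  rw [Finset.sum_mul]
  refine Finset.sum_le_sum fun i hi ↦ ?_
  have hik : i ≤ k := Finset.mem_range_succ_iff.1 hi
  have hCr : ‖iteratedDeriv i (fun t ↦ χ (c * t)) r‖ ≤ C i * r ^ (-i : ℝ) := by
    rw [Real.rpow_neg hr.le, Real.rpow_natCast, ← div_eq_mul_inv, le_div_iff₀' (by positivity)]
    simpa only [abs_of_pos hr] using hC i c r
  have hpow : r ^ (a - k) = r ^ (-i : ℝ) * r ^ (a - (k - i : ℕ)) := by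
    rw [← Real.rpow_add hr, Nat.cast_sub hik]
    ring_nf
  calc (k.choose i : ℝ) * ‖iteratedDeriv i (fun t ↦ χ (c * t)) r‖ * ‖iteratedDeriv (k - i) f r‖
      ≤ k.choose i * (C i * r ^ (-i : ℝ)) * (D (k - i) * r ^ (a - (k - i : ℕ))) := by
        have := (norm_nonneg _).trans hCr
        gcongr
        exact hDr i hi
    _ = k.choose i * C i * D (k - i) * r ^ (a - k) := by rw [hpow]; ring

lemma eventually_norm_iteratedDeriv_dilate_smul_le (hf : IsConormal f a) (χ : 𝓢(ℝ, ℝ)) (k : ℕ)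
    {η : ℝ} (hη : 0 < η) :
    ∀ᶠ r in 𝓝[>] 0, ∀ c : ℝ,
      ‖iteratedDeriv k (fun t ↦ χ (c * t) • f t) r‖ ≤ η * r ^ (a - 1 - k) := by
  obtain ⟨M, hM⟩ := hf.exists_norm_iteratedDeriv_dilate_smul_le χ k
  have hsmall : ∀ᶠ r in 𝓝[>] (0 : ℝ), M * r < η :=
    ((continuous_const.mul continuous_id).tendsto' 0 0 (mul_zero M)).eventually_lt_const hη
      |>.filter_mono nhdsWithin_le_nhds
  filter_upwards [hM, hsmall, self_mem_nhdsWithin] with r hMr hr (hr0 : 0 < r) c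
  calc ‖iteratedDeriv k (fun t ↦ χ (c * t) • f t) r‖
      ≤ M * r ^ (a - k) := hMr c
    _ = M * r * r ^ (a - 1 - k) := by
        rw [show a - k = 1 + (a - 1 - k) by ring, Real.rpow_add hr0, Real.rpow_one, mul_assoc]
    _ ≤ η * r ^ (a - 1 - k) := by gcongr

lemma exists_cutoff (hf : IsConormal f a) (K : ℕ) {η : ℝ} (hη : 0 < η) :
    ∃ h : ℝ → F, ContDiffOn ℝ ∞ h (Ioi 0) ∧ h =ᶠ[𝓝[>] 0] f ∧ (∀ r, η ≤ r → h r = 0) ∧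
      ∀ k ≤ K, ∀ r, 0 < r → ‖iteratedDeriv k h r‖ ≤ η * r ^ (a - 1 - k) := by
  let χ : ContDiffBump (0 : ℝ) := ⟨1 / 2, 1, by norm_num, by norm_num⟩
  have hbound : ∀ᶠ r in 𝓝[>] (0 : ℝ), ∀ k ∈ Finset.range (K + 1), ∀ c : ℝ,
      ‖iteratedDeriv k (fun t ↦ χ (c * t) • f t) r‖ ≤ η * r ^ (a - 1 - k) :=
    (eventually_all_finset _).2 fun k _ ↦ hf.eventually_norm_iteratedDeriv_dilate_smul_le
      (χ.hasCompactSupport.toSchwartzMap χ.contDiff) k hη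
  obtain ⟨δ, hδ, hδbound⟩ := mem_nhdsGT_iff_exists_Ioo_subset.1 hbound
  obtain ⟨ε, hε, hεlt⟩ := exists_between (lt_min hδ hη)
  have hχ_zero {r : ℝ} (hr : ε ≤ r) : χ (ε⁻¹ * r) = 0 := by
    refine χ.zero_of_le_dist ?_
    rw [dist_zero_right]
    exact ((one_le_inv_mul₀ hε).2 hr).trans (le_abs_self _)
  have hχ_one : ∀ᶠ r in 𝓝 (0 : ℝ), χ (ε⁻¹ * r) = 1 :=
    (continuous_const.mul continuous_id).tendsto' 0 0 (mul_zero ε⁻¹) χ.eventuallyEq_one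
  refine ⟨fun r ↦ χ (ε⁻¹ * r) • f r, ?_, ?_, fun r hr ↦ ?_, fun k hk r hr ↦ ?_⟩
  · exact (χ.contDiff.comp (contDiff_const.mul contDiff_id)).contDiffOn.smul hf.contDiffOn
  · filter_upwards [hχ_one.filter_mono nhdsWithin_le_nhds] with r hr
    rw [hr, one_smul]
  · have hεr : ε ≤ r := (hεlt.trans_le (min_le_right δ η)).le.trans hr
    simp only [hχ_zero hεr, zero_smul]
  · rcases lt_or_ge r δ with hrδ | hδr
    · exact hδbound ⟨hr, hrδ⟩ k (Finset.mem_range_succ_iff.2 hk) ε⁻¹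
    · have hεr : ε < r := (hεlt.trans_le (min_le_left δ η)).trans_le hδr
      have hzero : (fun r ↦ χ (ε⁻¹ * r) • f r) =ᶠ[𝓝 r] fun _ ↦ 0 := by
        filter_upwards [Ioi_mem_nhds hεr] with t ht
        rw [hχ_zero (le_of_lt ht), zero_smul]
      rw [hzero.iteratedDeriv_eq, iteratedDeriv_const, ite_self, norm_zero]
      positivity

end IsConormal

section AsymptoticSummation

variable {F : Type*} [NormedAddCommGroup F] {g h : ℕ → ℝ → F} {a η : ℕ → ℝ}

lemma tsum_sub_sum_range_eventuallyEq (hη : Tendsto η atTop (𝓝 0))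
    (hzero : ∀ n r, η n ≤ r → h n r = 0) (hgh : ∀ n, h n =ᶠ[𝓝[>] 0] g n) {N M : ℕ} (hNM : N ≤ M) :
    (fun t ↦ ∑' n, h n t - ∑ n ∈ Finset.range N, g n t) =ᶠ[𝓝[>] 0]
      fun t ↦ ∑ n ∈ Finset.Ico N M, g n t + ∑' n, h (n + M) t := by
  have heq : ∀ᶠ t in 𝓝[>] (0 : ℝ), ∀ n ∈ Finset.range M, h n t = g n t :=
    (eventually_all_finset _).2 fun n _ ↦ hgh n
  filter_upwards [heq, self_mem_nhdsWithin] with t ht ht0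
  obtain ⟨I, hI⟩ := exists_finset_eventually_eq_zero hη hzero ht0
  have hsummable : Summable fun n ↦ h n t := summable_of_ne_finset_zero hI.self_of_nhds
  rw [← hsummable.sum_add_tsum_nat_add M, Finset.sum_congr rfl ht,
    ← Finset.sum_range_add_sum_Ico _ hNM, add_assoc, add_sub_cancel_left]

variable [NormedSpace ℝ F]

lemma isBigO_iteratedDeriv_tsum_nat_add (ha : Monotone a) (hη : Summable η)
    (hsmooth : ∀ n, ContDiffOn ℝ ∞ (h n) (Ioi 0)) (hzero : ∀ n r, η n ≤ r → h n r = 0)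
    (hbound : ∀ n, ∀ k ≤ n, ∀ r, 0 < r → ‖iteratedDeriv k (h n) r‖ ≤ η n * r ^ (a n - 1 - k))
    {b : ℝ} {k M : ℕ} (hkM : k ≤ M) (hbM : b + 1 ≤ a M) :
    iteratedDeriv k (fun t ↦ ∑' n, h (n + M) t) =O[𝓝[>] 0] fun r ↦ r ^ (b - k) := by
  refine isBigO_iteratedDeriv_tsum ((summable_nat_add_iff M).2 hη) (fun n ↦ hsmooth (n + M))
    (fun n ↦ hzero (n + M)) fun n r hr ↦ ?_
  have hle := hbound (n + M) k (hkM.trans (Nat.le_add_left M n)) r hr.1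
  have hη_nonneg : 0 ≤ η (n + M) :=
    nonneg_of_mul_nonneg_left ((norm_nonneg _).trans hle) (Real.rpow_pos_of_pos hr.1 _)
  have hba : b + 1 ≤ a (n + M) := hbM.trans (ha (Nat.le_add_left M n))
  refine hle.trans (mul_le_mul_of_nonneg_left ?_ hη_nonneg)
  exact Real.rpow_le_rpow_of_exponent_ge hr.1 hr.2.le (by linarith)

lemma isConormal_tsum_sub_sum_range (ha : Monotone a) (ha_top : Tendsto a atTop atTop)
    (hη : Summable η) (hg : ∀ n, IsConormal (g n) (a n))
    (hsmooth : ∀ n, ContDiffOn ℝ ∞ (h n) (Ioi 0)) (hgh : ∀ n, h n =ᶠ[𝓝[>] 0] g n)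
    (hzero : ∀ n r, η n ≤ r → h n r = 0)
    (hbound : ∀ n, ∀ k ≤ n, ∀ r, 0 < r → ‖iteratedDeriv k (h n) r‖ ≤ η n * r ^ (a n - 1 - k))
    (N : ℕ) : IsConormal (fun t ↦ ∑' n, h n t - ∑ n ∈ Finset.range N, g n t) (a N) where
  contDiffOn := by
    refine ContDiffOn.sub (fun r hr ↦ ?_) (ContDiffOn.sum fun n _ ↦ (hg n).contDiffOn)
    exact (contDiffAt_tsum_of_locallyFinite
      (exists_finset_eventually_eq_zero hη.tendsto_atTop_zero hzero hr)
      fun n ↦ (hsmooth n).contDiffAt (Ioi_mem_nhds hr)).contDiffWithinAt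
  isBigO_iteratedDeriv k := by
    obtain ⟨M, haM, hkM, hNM⟩ := ((ha_top.eventually_ge_atTop (a N + 1)).and
      ((eventually_ge_atTop k).and (eventually_ge_atTop N))).exists
    have head : IsConormal (fun t ↦ ∑ n ∈ Finset.Ico N M, g n t) (a N) :=
      IsConormal.sum fun n hn ↦ (hg n).mono (ha (Finset.mem_Ico.1 hn).1)
    have tail := isBigO_iteratedDeriv_tsum_nat_add ha hη hsmooth hzero hbound hkM haM
    refine ((head.isBigO_iteratedDeriv k).add tail).congr' ?_ EventuallyEq.rfl
    filter_upwards [eventuallyEq_iteratedDeriv_nhdsGT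
      (tsum_sub_sum_range_eventuallyEq hη.tendsto_atTop_zero hzero hgh hNM) k,
      self_mem_nhdsWithin] with r hsplit (hr : 0 < r)
    rw [hsplit, iteratedDeriv_fun_add (head.contDiffAt hr k)]
    have hη_tail : Tendsto (fun n ↦ η (n + M)) atTop (𝓝 0) :=
      (tendsto_add_atTop_iff_nat M).2 hη.tendsto_atTop_zero
    exact contDiffAt_tsum_of_locallyFinite
      (exists_finset_eventually_eq_zero hη_tail (fun n ↦ hzero (n + M)) hr)
      fun n ↦ contDiffAt_natCast_of_contDiffOn (hsmooth (n + M)) (Ioi_mem_nhds hr) k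

theorem exists_isConormal_sub_sum_range (ha : Monotone a) (ha_top : Tendsto a atTop atTop)
    (hg : ∀ n, IsConormal (g n) (a n)) :
    ∃ v : ℝ → F, ∀ N, IsConormal (fun t ↦ v t - ∑ n ∈ Finset.range N, g n t) (a N) := by
  choose h hsmooth hgh hzero hbound using
    fun n : ℕ ↦ (hg n).exists_cutoff n (η := (1 / 2) ^ n) (by positivity)
  exact ⟨fun t ↦ ∑' n, h n t, isConormal_tsum_sub_sum_range ha ha_top summable_geometric_two hg
    hsmooth hgh hzero hbound⟩

end AsymptoticSummation

/-- The building block `r ^ s (log r) ^ p` of polyhomogeneous expansions; only its values for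
`r > 0` are meaningful. -/
def phgMonomial (s : ℂ) (p : ℕ) (r : ℝ) : ℂ := (r : ℂ) ^ s * (Real.log r : ℂ) ^ p

section Monomial

variable (s : ℂ) (p : ℕ)

lemma phgMonomial_eq_exp_mul {r : ℝ} (hr : 0 < r) :
    phgMonomial s p r = Complex.exp (s * Real.log r) * (Real.log r : ℂ) ^ p := by
  rw [phgMonomial, Complex.cpow_def_of_ne_zero (mod_cast hr.ne'), Complex.ofReal_log hr.le,
    mul_comm s]

lemma contDiffOn_phgMonomial : ContDiffOn ℝ ∞ (phgMonomial s p) (Ioi 0) := by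
  have hlog : ContDiffOn ℝ ∞ (fun r : ℝ ↦ (Real.log r : ℂ)) (Ioi 0) :=
    Complex.ofRealCLM.contDiff.comp_contDiffOn
      (Real.contDiffOn_log.mono fun _ hr ↦ ne_of_gt hr)
  exact ((contDiffOn_const.mul hlog).cexp.mul (hlog.pow p)).congr
    fun _ hr ↦ phgMonomial_eq_exp_mul s p hr

lemma deriv_phgMonomial {r : ℝ} (hr : 0 < r) :
    deriv (phgMonomial s p) r =
      s * phgMonomial (s - 1) p r + p * phgMonomial (s - 1) (p - 1) r := by
  have hlog : HasDerivAt (fun t : ℝ ↦ (Real.log t : ℂ)) ((r⁻¹ : ℝ) : ℂ) r :=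
    (Real.hasDerivAt_log hr.ne').ofReal_comp
  have heq : phgMonomial s p =ᶠ[𝓝 r]
      fun t ↦ Complex.exp (s * Real.log t) * (Real.log t : ℂ) ^ p := by
    filter_upwards [Ioi_mem_nhds hr] with t ht using phgMonomial_eq_exp_mul s p ht
  have hexp : Complex.exp ((s - 1) * Real.log r) =
      Complex.exp (s * Real.log r) * ((r⁻¹ : ℝ) : ℂ) := by
    rw [sub_mul, one_mul, Complex.exp_sub, ← Complex.ofReal_exp, Real.exp_log hr,
      Complex.ofReal_inv, div_eq_mul_inv]
  rw [heq.deriv_eq, ((hlog.const_mul s).cexp.fun_mul (hlog.fun_pow p)).deriv,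
    phgMonomial_eq_exp_mul _ _ hr, phgMonomial_eq_exp_mul _ _ hr, hexp]
  ring

variable {s} {a : ℝ}

lemma isBigO_phgMonomial (ha : a < s.re) : phgMonomial s p =O[𝓝[>] 0] fun r ↦ r ^ a := by
  have hlog : (fun r ↦ |Real.log r| ^ (p : ℝ)) =O[𝓝[>] 0] fun r ↦ r ^ (a - s.re) :=
    (isLittleO_abs_log_rpow_rpow_nhdsGT_zero (p : ℝ) (sub_neg.2 ha)).isBigO
  have hmul := (isBigO_refl (fun r : ℝ ↦ r ^ s.re) (𝓝[>] 0)).mul hlog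
  refine (IsBigO.of_norm_eventuallyLE ?_).trans (hmul.congr' EventuallyEq.rfl ?_)
  · filter_upwards [self_mem_nhdsWithin] with r hr
    rw [phgMonomial, norm_mul, norm_pow, Complex.norm_cpow_eq_rpow_re_of_pos hr, Complex.norm_real,
      Real.norm_eq_abs, Real.rpow_natCast]
  · filter_upwards [self_mem_nhdsWithin] with r hr
    rw [← Real.rpow_add hr, add_sub_cancel]

lemma isBigO_iteratedDeriv_phgMonomial (k : ℕ) {s : ℂ} (p : ℕ) {a : ℝ} (ha : a < s.re) :
    iteratedDeriv k (phgMonomial s p) =O[𝓝[>] 0] fun r ↦ r ^ (a - k) := by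
  induction k generalizing s p a with
  | zero => simpa using isBigO_phgMonomial p ha
  | succ k ih =>
    have ha' : a - 1 < (s - 1).re := by simpa using ha
    refine (((ih p ha').const_mul_left s).add ((ih (p - 1) ha').const_mul_left p)).congr' ?_ ?_
    · filter_upwards [self_mem_nhdsWithin] with r (hr : 0 < r)
      have hderiv : deriv (phgMonomial s p) =ᶠ[𝓝 r]
          fun t ↦ s * phgMonomial (s - 1) p t + p * phgMonomial (s - 1) (p - 1) t := by
        filter_upwards [Ioi_mem_nhds hr] with t ht using deriv_phgMonomial s p ht
      have hdiff (q : ℕ) : ContDiffAt ℝ k (phgMonomial (s - 1) q) r :=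
        contDiffAt_natCast_of_contDiffOn (contDiffOn_phgMonomial _ q) (Ioi_mem_nhds hr) k
      rw [iteratedDeriv_succ', hderiv.iteratedDeriv_eq,
        iteratedDeriv_fun_add (contDiffAt_const.mul (hdiff p))
          (contDiffAt_const.mul (hdiff (p - 1))),
        iteratedDeriv_const_mul _ (hdiff p), iteratedDeriv_const_mul _ (hdiff (p - 1))]
    · exact Eventually.of_forall fun r ↦ by push_cast; ring_nf

lemma isConormal_phgMonomial (ha : a < s.re) : IsConormal (phgMonomial s p) a where
  contDiffOn := contDiffOn_phgMonomial s p
  isBigO_iteratedDeriv k := isBigO_iteratedDeriv_phgMonomial k p ha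

end Monomial

section Expansion

variable {B : Type*} [NormedAddCommGroup B] [NormedSpace ℂ B] {E : Set (ℂ × ℕ)} {c : ℂ × ℕ → B}
  {N M : ℝ}

lemma phgPartialSum_eq_sum (hN : {q ∈ E | q.1.re ≤ N}.Finite) (r : ℝ) :
    phgPartialSum E c N r = ∑ q ∈ hN.toFinset, phgMonomial q.1 q.2 r • c q :=
  finsum_mem_eq_finite_toFinset_sum _ hN

lemma contDiffOn_phgPartialSum (hN : {q ∈ E | q.1.re ≤ N}.Finite) :
    ContDiffOn ℝ ∞ (phgPartialSum E c N) (Ioi 0) :=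
  (ContDiffOn.sum fun q _ ↦ (contDiffOn_phgMonomial q.1 q.2).smul contDiffOn_const).congr
    fun r _ ↦ phgPartialSum_eq_sum hN r

lemma isConormal_phgPartialSum_sub (hM : {q ∈ E | q.1.re ≤ M}.Finite) (hNM : N ≤ M) :
    IsConormal (fun r ↦ phgPartialSum E c M r - phgPartialSum E c N r) N := by
  classical
  have hsub : {q ∈ E | q.1.re ≤ N} ⊆ {q ∈ E | q.1.re ≤ M} := fun q hq ↦ ⟨hq.1, hq.2.trans hNM⟩
  have hN := hM.subset hsub
  have hdiff (r : ℝ) : phgPartialSum E c M r - phgPartialSum E c N r =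
      ∑ q ∈ hM.toFinset \ hN.toFinset, phgMonomial q.1 q.2 r • c q := by
    rw [phgPartialSum_eq_sum hM, phgPartialSum_eq_sum hN,
      Finset.sum_sdiff_eq_sub (Finite.toFinset_subset_toFinset.2 hsub)]
  simp only [hdiff]
  refine IsConormal.sum fun q hq ↦ (isConormal_phgMonomial q.2 ?_).smul_const (c q)
  rw [Finset.mem_sdiff, hM.mem_toFinset, hN.mem_toFinset] at hq
  exact not_le.1 fun hle ↦ hq.2 ⟨hq.1.1, hle⟩

theorem exists_contDiffOn_hasPhgExpansion (hE : ∀ N : ℝ, {q ∈ E | q.1.re ≤ N}.Finite)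
    (c : ℂ × ℕ → B) : ∃ u : ℝ → B, ContDiffOn ℝ ∞ u (Ioi 0) ∧ HasPhgExpansion E c u := by
  obtain ⟨v, hv⟩ := exists_isConormal_sub_sum_range Nat.mono_cast tendsto_natCast_atTop_atTop
    fun n : ℕ ↦ isConormal_phgPartialSum_sub (c := c) (hE ↑(n + 1)) (Nat.mono_cast n.le_succ)
  have hv_smooth : ContDiffOn ℝ ∞ v (Ioi 0) := by simpa using (hv 0).contDiffOn
  refine ⟨fun t ↦ phgPartialSum E c (0 : ℕ) t + v t,
    (contDiffOn_phgPartialSum (hE _)).add hv_smooth, fun N k _ ↦ ?_⟩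
  have htelescope (t : ℝ) : v t - ∑ n ∈ Finset.range N,
      (phgPartialSum E c ↑(n + 1) t - phgPartialSum E c n t) =
        phgPartialSum E c (0 : ℕ) t + v t - phgPartialSum E c N t := by
    rw [Finset.sum_range_sub fun n : ℕ ↦ phgPartialSum E c n t]
    abel
  simpa only [htelescope] using (hv N).isBigO_iteratedDeriv k

theorem HasPhgExpansion.isBigO_iteratedDeriv_sub {ε : ℝ} {u u' : ℝ → B}
    (hE : ∀ N : ℝ, {q ∈ E | q.1.re ≤ N}.Finite) (hε : 0 < ε)
    (hu : ContDiffOn ℝ ∞ u (Ioo 0 ε)) (hexp : HasPhgExpansion E c u)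
    (hu' : ContDiffOn ℝ ∞ u' (Ioo 0 ε)) (hexp' : HasPhgExpansion E c u') (k N : ℕ) :
    iteratedDeriv k (fun t ↦ u t - u' t) =O[𝓝[>] 0] fun r ↦ r ^ (N : ℝ) := by
  have hsub := (hexp (N + k) k (Nat.le_add_left k N)).sub (hexp' (N + k) k (Nat.le_add_left k N))
  refine hsub.congr' ?_ (Eventually.of_forall fun r ↦ by push_cast; ring_nf)
  filter_upwards [Ioo_mem_nhdsGT hε] with r hr
  have hdiff {w : ℝ → B} (hw : ContDiffOn ℝ ∞ w (Ioo 0 ε)) : ContDiffAt ℝ k w r :=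
    contDiffAt_natCast_of_contDiffOn hw (Ioo_mem_nhds hr.1 hr.2) k
  have hS := hdiff ((contDiffOn_phgPartialSum (c := c) (hE ↑(N + k))).mono Ioo_subset_Ioi_self)
  rw [← iteratedDeriv_fun_sub ((hdiff hu).sub hS) ((hdiff hu').sub hS)]
  simp only [sub_sub_sub_cancel_right]

end Expansion

theorem borel_phg_general {B : Type*} [NormedAddCommGroup B] [NormedSpace ℂ B]
    {E : Set (ℂ × ℕ)} (hE : ∀ N : ℝ, {q ∈ E | q.1.re ≤ N}.Finite) (c : ℂ × ℕ → B) :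
    (∃ u : ℝ → B, ContDiffOn ℝ ∞ u (Ioi 0) ∧ HasPhgExpansion E c u) ∧
    ∀ ε > 0, ∀ u u' : ℝ → B, ContDiffOn ℝ ∞ u (Ioo 0 ε) → HasPhgExpansion E c u →
      ContDiffOn ℝ ∞ u' (Ioo 0 ε) → HasPhgExpansion E c u' →
      ∀ k N : ℕ,
        iteratedDeriv k (fun t ↦ u t - u' t) =O[𝓝[>] 0] fun r ↦ r ^ (N : ℝ) :=
  ⟨exists_contDiffOn_hasPhgExpansion hE c,
    fun _ hε _ _ hu hexp hu' hexp' ↦ hexp.isBigO_iteratedDeriv_sub hE hε hu hu' hexp'⟩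

/-- **Borel-type lemma.** If `E ⊆ ℂ × ℕ` is an index set (every left
half-plane meets it in finitely many points) and `c(s,p) ∈ B` are coefficients in a
complex Banach space, then there is a smooth `u : (0,1) → B` with polyhomogeneous
expansion `Σ r^s (log r)^p c(s,p)`, and any two such functions differ by a function all of
whose derivatives vanish to infinite order at `0⁺`. -/
theorem borel_phg (E : Set (ℂ × ℕ)) (hE : ∀ N : ℝ, {q ∈ E | q.1.re ≤ N}.Finite)
    (B : Type*) [NormedAddCommGroup B] [NormedSpace ℂ B] [CompleteSpace B]
    (c : ℂ × ℕ → B) :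
    (∃ u : ℝ → B, ContDiffOn ℝ (⊤ : ℕ∞) u (Ioo 0 1) ∧ HasPhgExpansion E c u) ∧
    ∀ u u' : ℝ → B, ContDiffOn ℝ (⊤ : ℕ∞) u (Ioo 0 1) → HasPhgExpansion E c u →
      ContDiffOn ℝ (⊤ : ℕ∞) u' (Ioo 0 1) → HasPhgExpansion E c u' →
      ∀ k N : ℕ,
        (fun r : ℝ => iteratedDeriv k (fun t : ℝ => u t - u' t) r)
          =O[𝓝[>] (0 : ℝ)] fun r : ℝ => r ^ (N : ℝ) :=
  have ⟨⟨u, hu, hexp⟩, huniq⟩ := borel_phg_general hE c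
  ⟨⟨u, hu.mono Ioo_subset_Ioi_self, hexp⟩, huniq 1 one_pos⟩
end
end
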